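/- For each fixed integer ℓ ≥ 1, the quotient N2_{2ℓ}(n) / ( (−1)^ℓ · √2 · (8n)^{ℓ−1} · B_{2ℓ}(1/2) · exp(π·√(n/2)) ) tends to 1 as n → ∞; that is, N2_{2ℓ}(n) ∼ (−1)^ℓ √2 (8n)^{ℓ−1} B_{2ℓ}(1/2) exp(π√(n/2)) as n → ∞. -/

import Mathlib

open scoped Classical

/-- The M2-rank of a partition: ⌈ℓ/2⌉ − s, where ℓ is the largest part
(0 for the empty partition) and s is the number of parts. -/
def m2Rank {n : ℕ} (P : n.Partition) : ℤ :=
  (((P.parts.sup + 1) / 2 : ℕ) : ℤ) - (Multiset.card P.parts : ℤ)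

/-- A partition has no repeated odd parts. -/
def NoRepeatedOddParts {n : ℕ} (P : n.Partition) : Prop :=
  ∀ j : ℕ, Odd j → P.parts.count j ≤ 1

/-- `N2exact m n` is the number of partitions of `n` without repeated odd parts whose
M2-rank is exactly `m`. -/
noncomputable def N2exact (m : ℤ) (n : ℕ) : ℕ :=
  Nat.card {P : n.Partition // NoRepeatedOddParts P ∧ m2Rank P = m}

/-- The `2ℓ`-th M2-rank moment `N2_{2ℓ}(n) = Σ_{m∈ℤ} m^{2ℓ} N2(m,n)` (a finite sum,
formalized as a `tsum` over the discrete group ℤ). -/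
noncomputable def N2moment (ℓ n : ℕ) : ℤ :=
  ∑' m : ℤ, m ^ (2 * ℓ) * (N2exact m n : ℤ)

/-!
Let `F(q)` be the generating function of the partitions without repeated odd parts. Those with at
most `s` parts, all at most `2L`, have a generating function symmetric in `s` and `L`; its two
Pascal-type recursions show that the nonempty ones of M2-rank at least `m ≥ 0` have generating
function `F(q) ∑_{k ≥ 1} (-1)^(k-1) q^(k (2k - 1 + 2m))`. Consequently `1 / F` is a theta series,
and summation by parts writes the generating function of the `p`-th absolute moments as
`2 F(q) ∑_{k ≥ 1} (-1)^(k-1) q^(k (2k - 1)) (1 - q^(2k)) ∑_m m^p q^(2km)`. For `q = e^(-s)` and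
`s → 0` the alternating series times `s^p` tends to `∑_{k ≥ 1} (-1)^(k-1) p! / (2k)^p`, which for
even `p` is a Bernoulli value at `1/2` by Fourier expansion, while the modular transformation of the
theta function gives `F(e^(-s)) ∼ √(s / π) e^(π² / (8s))`.

The coefficient of `q^n` is then extracted by Cauchy's formula on the circle `q = e^(-(t - iθ))`
with the saddle point `t = π / √(8n)` and the scaling `θ = t^(3/2) v`. The integrand converges
pointwise to a Gaussian in `v`, and since
`|F(q)| ≤ F(|q|) exp(-(1/4) ∑_k (|q|^(2k+1) - Re q^(2k+1)))` it has an integrable majorant on the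
whole circle, so minor arcs need no separate treatment.
-/

namespace M2Rank

open Filter Topology Complex
open scoped Real

/-! ### Partitions without repeated odd parts and their generating functions -/

/-- The multisets of positive integers in which no odd integer is repeated: the partitions without
repeated odd parts, of all sizes at once. -/
def oddDistinct : Set (Multiset ℕ) := {M | 0 ∉ M ∧ ∀ j, Odd j → M.count j ≤ 1}

/-- The members of `oddDistinct` with at most `s` parts, all of them at most `N`. -/
def box (s N : ℕ) : Set (Multiset ℕ) := {M ∈ oddDistinct | M.card ≤ s ∧ ∀ x ∈ M, x ≤ N}

lemma zero_mem_oddDistinct : (0 : Multiset ℕ) ∈ oddDistinct := by simp [oddDistinct]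

lemma card_le_sum_of_mem_oddDistinct {M : Multiset ℕ} (hM : M ∈ oddDistinct) :
    M.card ≤ M.sum := by
  simpa using Multiset.card_nsmul_le_sum fun x hx =>
    Nat.one_le_iff_ne_zero.2 fun h => hM.1 (h ▸ hx)

lemma cons_mem_oddDistinct {a : ℕ} {M : Multiset ℕ} :
    a ::ₘ M ∈ oddDistinct ↔ a ≠ 0 ∧ M ∈ oddDistinct ∧ (Odd a → a ∉ M) := by
  simp only [oddDistinct, Set.mem_ofPred_eq, Multiset.mem_cons, not_or, Multiset.count_cons]
  constructor
  · rintro ⟨⟨ha, hM⟩, hc⟩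
    refine ⟨Ne.symm ha, ⟨hM, fun j hj => (Nat.le_add_right _ _).trans (hc j hj)⟩, fun hodd => ?_⟩
    have := hc a hodd
    rw [if_pos rfl] at this
    exact Multiset.count_eq_zero.1 (by lia)
  · rintro ⟨ha, ⟨hM, hc⟩, hodd⟩
    refine ⟨⟨Ne.symm ha, hM⟩, fun j hj => ?_⟩
    split_ifs with hja
    · subst hja
      rw [Multiset.count_eq_zero.2 (hodd hj)]
    · exact hc j hj

lemma box_subset_oddDistinct (s N : ℕ) : box s N ⊆ oddDistinct := fun _ h => h.1

lemma box_mono {s s' N N' : ℕ} (hs : s ≤ s') (hN : N ≤ N') : box s N ⊆ box s' N' :=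
  fun _ hM => ⟨hM.1, hM.2.1.trans hs, fun x hx => (hM.2.2 x hx).trans hN⟩

lemma mem_box_sum {M : Multiset ℕ} (hM : M ∈ oddDistinct) : M ∈ box M.sum M.sum :=
  ⟨hM, card_le_sum_of_mem_oddDistinct hM, fun _ hx => Multiset.le_sum_of_mem hx⟩

lemma box_zero_left (N : ℕ) : box 0 N = {0} := by
  ext M
  simp only [box, Set.mem_ofPred_eq, Set.mem_singleton_iff, Nat.le_zero, Multiset.card_eq_zero]
  exact ⟨fun h => h.2.1, by rintro rfl; simp [zero_mem_oddDistinct]⟩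

lemma box_zero_right (s : ℕ) : box s 0 = {0} := by
  ext M
  simp only [box, Set.mem_ofPred_eq, Set.mem_singleton_iff, Nat.le_zero]
  refine ⟨fun ⟨hM, _, h⟩ => ?_, by rintro rfl; simp [zero_mem_oddDistinct]⟩
  exact Multiset.eq_zero_of_forall_notMem fun x hx => hM.1 (h x hx ▸ hx)

lemma notMem_of_mem_box {s N a : ℕ} {M : Multiset ℕ} (hM : M ∈ box s N) (ha : N < a) : a ∉ M :=
  fun h => ha.not_ge (hM.2.2 a h)

lemma mem_box_of_notMem {s N : ℕ} {M : Multiset ℕ} (h : N + 1 ∉ M) (hM : M ∈ box s (N + 1)) :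
    M ∈ box s N := by
  refine ⟨hM.1, hM.2.1, fun x hx => ?_⟩
  have := hM.2.2 x hx
  have : x ≠ N + 1 := fun hx' => h (hx' ▸ hx)
  lia

lemma cons_mem_box {s N : ℕ} {M : Multiset ℕ} :
    (N + 1) ::ₘ M ∈ box (s + 1) (N + 1) ↔ M ∈ box s (if Even N then N else N + 1) := by
  have hcons : (N + 1) ::ₘ M ∈ box (s + 1) (N + 1) ↔
      M ∈ box s (N + 1) ∧ (Even N → N + 1 ∉ M) := by
    simp only [box, Set.mem_ofPred_eq, cons_mem_oddDistinct, Nat.odd_add_one, Nat.not_odd_iff_even,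
      Multiset.card_cons, Multiset.mem_cons, forall_eq_or_imp]
    grind
  rw [hcons]
  split_ifs with hN
  · simp only [hN, true_imp_iff]
    exact ⟨fun h => mem_box_of_notMem h.2 h.1,
      fun h => ⟨box_mono le_rfl N.le_succ h, notMem_of_mem_box h N.lt_succ_self⟩⟩
  · simp [hN]

-- Remove one copy of the largest admissible part `N + 1`, if it occurs.
lemma box_succ_succ (s N : ℕ) :
    box (s + 1) (N + 1) =
      box (s + 1) N ∪ ((N + 1) ::ₘ ·) '' box s (if Even N then N else N + 1) := by
  ext M
  simp only [Set.mem_union, Set.mem_image, ← cons_mem_box]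
  constructor
  · intro hM
    by_cases h : N + 1 ∈ M
    · obtain ⟨M', rfl⟩ := Multiset.exists_cons_of_mem h
      exact .inr ⟨M', hM, rfl⟩
    · exact .inl (mem_box_of_notMem h hM)
  · rintro (hM | ⟨M', hM, rfl⟩)
    · exact box_mono le_rfl N.le_succ hM
    · exact hM

lemma disjoint_box_image_cons (s N : ℕ) (A : Set (Multiset ℕ)) :
    Disjoint (box s N) (((N + 1) ::ₘ ·) '' A) := by
  rw [Set.disjoint_left]
  rintro _ h ⟨M, _, rfl⟩
  exact notMem_of_mem_box h N.lt_succ_self (Multiset.mem_cons_self _ _)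

lemma finite_box (s N : ℕ) : (box s N).Finite := by
  induction s generalizing N with
  | zero => rw [box_zero_left]; exact Set.finite_singleton _
  | succ s ihs =>
    induction N with
    | zero => rw [box_zero_right]; exact Set.finite_singleton _
    | succ N ih => rw [box_succ_succ]; exact ih.union ((ihs _).image _)

section GenFun

variable {R : Type*} [NormedField R]

/-- The generating function `∑ q ^ |M|` of a set `A` of partitions, `|M|` being the sum of the
parts of `M`. -/
noncomputable def genFun (q : R) (A : Set (Multiset ℕ)) : R :=
  ∑' M, A.indicator (fun M => q ^ M.sum) M

lemma genFun_empty (q : R) : genFun q ∅ = 0 := by simp [genFun]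

lemma genFun_singleton_zero (q : R) : genFun q {0} = 1 := by
  rw [genFun, ← tsum_subtype]; simp

lemma genFun_union {q : R} {A B : Set (Multiset ℕ)}
    (hA : Summable (A.indicator fun M => q ^ M.sum))
    (hB : Summable (B.indicator fun M => q ^ M.sum)) (hd : Disjoint A B) :
    genFun q (A ∪ B) = genFun q A + genFun q B := by
  rw [genFun, genFun, genFun, ← hA.tsum_add hB, Set.indicator_union_of_disjoint hd]

lemma genFun_image_cons (q : R) (a : ℕ) (A : Set (Multiset ℕ)) :
    genFun q ((a ::ₘ ·) '' A) = q ^ a * genFun q A := by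
  rw [genFun, genFun, ← tsum_subtype, ← tsum_subtype, ← tsum_mul_left,
    tsum_image (fun M : Multiset ℕ => q ^ M.sum)
      (fun _ _ _ _ h => (Multiset.cons_inj_right a).1 h)]
  simp only [Multiset.sum_cons, pow_add]

lemma summable_indicator_of_finite (q : R) {A : Set (Multiset ℕ)} (hA : A.Finite) :
    Summable (A.indicator fun M => q ^ M.sum) :=
  summable_of_hasFiniteSupport (hA.subset Set.support_indicator_subset)

lemma genFun_box_succ_succ (q : R) (s N : ℕ) :
    genFun q (box (s + 1) (N + 1)) =
      genFun q (box (s + 1) N) +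
        q ^ (N + 1) * genFun q (box s (if Even N then N else N + 1)) := by
  rw [box_succ_succ, genFun_union (summable_indicator_of_finite q (finite_box _ _))
    (summable_indicator_of_finite q ((finite_box _ _).image _)) (disjoint_box_image_cons _ _ _),
    genFun_image_cons]

lemma norm_indicator_pow_sum (q : R) (A : Set (Multiset ℕ)) (M : Multiset ℕ) :
    ‖A.indicator (fun M => q ^ M.sum) M‖ = A.indicator (fun M => ‖q‖ ^ M.sum) M := by
  simp only [norm_indicator_eq_indicator_norm, norm_pow]

end GenFun

section Summability

variable {ρ : ℝ}

lemma indicator_pow_sum_nonneg (hρ : 0 ≤ ρ) (A : Set (Multiset ℕ)) (M : Multiset ℕ) :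
    0 ≤ A.indicator (fun M => ρ ^ M.sum) M :=
  Set.indicator_nonneg (fun _ _ => pow_nonneg hρ _) M

lemma genFun_mono (hρ : 0 ≤ ρ) {A B : Set (Multiset ℕ)} (hAB : A ⊆ B)
    (hB : Summable (B.indicator fun M => ρ ^ M.sum)) : genFun ρ A ≤ genFun ρ B := by
  have hle (M : Multiset ℕ) :
      A.indicator (fun M => ρ ^ M.sum) M ≤ B.indicator (fun M => ρ ^ M.sum) M :=
    Set.indicator_le_indicator_of_subset hAB (fun M => pow_nonneg hρ M.sum) M
  exact (hB.of_nonneg_of_le (indicator_pow_sum_nonneg hρ A) hle).tsum_le_tsum hle hB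

lemma one_sub_pow_succ_pos (hρ₀ : 0 ≤ ρ) (hρ₁ : ρ < 1) (j : ℕ) : 0 < 1 - ρ ^ (j + 1) :=
  sub_pos.2 (pow_lt_one₀ hρ₀ hρ₁ j.succ_ne_zero)

lemma genFun_box_le_prod (hρ₀ : 0 ≤ ρ) (hρ₁ : ρ < 1) (s N : ℕ) :
    genFun ρ (box s N) ≤ ∏ j ∈ Finset.range N, (1 - ρ ^ (j + 1))⁻¹ := by
  have hpos := one_sub_pow_succ_pos hρ₀ hρ₁
  induction N with
  | zero => simp [box_zero_right, genFun_singleton_zero]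
  | succ N ih =>
    rw [Finset.prod_range_succ, ← div_eq_mul_inv, le_div_iff₀ (hpos N)]
    refine le_trans ?_ ih
    cases s with
    | zero =>
      simp only [box_zero_left, genFun_singleton_zero]
      linarith [pow_nonneg hρ₀ (N + 1)]
    | succ s =>
      have hsub : box s (if Even N then N else N + 1) ⊆ box (s + 1) (N + 1) :=
        box_mono s.le_succ (by split_ifs <;> lia)
      have hle := mul_le_mul_of_nonneg_left
        (genFun_mono hρ₀ hsub (summable_indicator_of_finite ρ (finite_box _ _)))
        (pow_nonneg hρ₀ (N + 1))
      linarith [genFun_box_succ_succ ρ s N]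

lemma prod_inv_one_sub_pow_le (hρ₀ : 0 ≤ ρ) (hρ₁ : ρ < 1) (N : ℕ) :
    ∏ j ∈ Finset.range N, (1 - ρ ^ (j + 1))⁻¹ ≤ Real.exp ((1 - ρ)⁻¹ * (1 - ρ)⁻¹) := by
  have hpos := one_sub_pow_succ_pos hρ₀ hρ₁
  have hr : 0 < 1 - ρ := sub_pos.2 hρ₁
  have hfactor (j : ℕ) : (1 - ρ ^ (j + 1))⁻¹ ≤ 1 + (1 - ρ)⁻¹ * ρ ^ j := by
    have h1 : 1 ≤ (1 - ρ)⁻¹ * (1 - ρ ^ (j + 1)) := by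
      rw [← div_eq_inv_mul, one_le_div hr]
      linarith [pow_le_of_le_one hρ₀ hρ₁.le (Nat.add_one_ne_zero j)]
    rw [inv_le_iff_one_le_mul₀ (hpos j)]
    nlinarith [pow_nonneg hρ₀ j, pow_le_pow_of_le_one hρ₀ hρ₁.le (Nat.le_add_right j 1)]
  calc ∏ j ∈ Finset.range N, (1 - ρ ^ (j + 1))⁻¹
      ≤ ∏ j ∈ Finset.range N, (1 + (1 - ρ)⁻¹ * ρ ^ j) :=
        Finset.prod_le_prod (fun j _ => (inv_pos.2 (hpos j)).le) fun j _ => hfactor j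
    _ ≤ Real.exp (∑ j ∈ Finset.range N, (1 - ρ)⁻¹ * ρ ^ j) :=
        Real.prod_one_add_le_exp_sum _ fun j => by positivity
    _ ≤ Real.exp ((1 - ρ)⁻¹ * (1 - ρ)⁻¹) := by
        rw [← Finset.mul_sum, ← tsum_geometric_of_lt_one hρ₀ hρ₁]
        gcongr
        exact (summable_geometric_of_lt_one hρ₀ hρ₁).sum_le_tsum _ fun _ _ => pow_nonneg hρ₀ _

lemma summable_oddDistinct (hρ₀ : 0 ≤ ρ) (hρ₁ : ρ < 1) :
    Summable (oddDistinct.indicator fun M => ρ ^ M.sum) := by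
  refine summable_of_sum_le (indicator_pow_sum_nonneg hρ₀ _)
    (c := Real.exp ((1 - ρ)⁻¹ * (1 - ρ)⁻¹)) fun u => ?_
  set K := u.sup Multiset.sum
  calc ∑ M ∈ u, oddDistinct.indicator (fun M => ρ ^ M.sum) M
      ≤ ∑ M ∈ u, (box K K).indicator (fun M => ρ ^ M.sum) M := by
        refine Finset.sum_le_sum fun M hM =>
          Set.indicator_apply_le' (fun hP => ?_) fun _ => indicator_pow_sum_nonneg hρ₀ _ _
        have hK : M.sum ≤ K := Finset.le_sup (f := Multiset.sum) hM
        rw [Set.indicator_of_mem (box_mono hK hK (mem_box_sum hP))]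
    _ ≤ genFun ρ (box K K) := (summable_indicator_of_finite ρ (finite_box _ _)).sum_le_tsum _
        fun M _ => indicator_pow_sum_nonneg hρ₀ _ M
    _ ≤ _ := (genFun_box_le_prod hρ₀ hρ₁ K K).trans (prod_inv_one_sub_pow_le hρ₀ hρ₁ K)

end Summability

section NormLtOne

variable {q : ℂ} {A B : Set (Multiset ℕ)}

lemma summable_indicator (hq : ‖q‖ < 1) (hA : A ⊆ oddDistinct) :
    Summable (A.indicator fun M => q ^ M.sum) := by
  refine .of_norm_bounded (summable_oddDistinct (norm_nonneg q) hq) fun M => ?_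
  rw [norm_indicator_pow_sum]
  exact Set.indicator_le_indicator_of_subset hA (fun M => pow_nonneg (norm_nonneg q) _) M

lemma norm_genFun_le (hq : ‖q‖ < 1) (hA : A ⊆ oddDistinct) :
    ‖genFun q A‖ ≤ genFun ‖q‖ oddDistinct := by
  refine tsum_of_norm_bounded (summable_oddDistinct (norm_nonneg q) hq).hasSum fun M => ?_
  rw [norm_indicator_pow_sum]
  exact Set.indicator_le_indicator_of_subset hA (fun M => pow_nonneg (norm_nonneg q) _) M

lemma genFun_sdiff (hq : ‖q‖ < 1) (hAB : A ⊆ B) (hB : B ⊆ oddDistinct) :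
    genFun q (B \ A) = genFun q B - genFun q A := by
  rw [eq_sub_iff_add_eq, ← genFun_union (summable_indicator hq (Set.sdiff_subset.trans hB))
    (summable_indicator hq (hAB.trans hB)) Set.disjoint_sdiff_left, Set.sdiff_union_of_subset hAB]

lemma hasSum_genFun_fiber (hq : ‖q‖ < 1) (hA : A ⊆ oddDistinct) (f : Multiset ℕ → ℕ) :
    HasSum (fun k => genFun q {M ∈ A | f M = k}) (genFun q A) := by
  have hfib (k : ℕ) : genFun q {M ∈ A | f M = k} =
      ∑' M : f ⁻¹' {k}, A.indicator (fun M => q ^ M.sum) (M : Multiset ℕ) := by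
    rw [tsum_subtype (f ⁻¹' {k}), Set.indicator_indicator, Set.inter_comm]
    rfl
  simp only [hfib]
  exact (summable_indicator hq hA).hasSum.tsum_fiberwise f

end NormLtOne

/-- The generating function of partitions without repeated odd parts with at most `s` parts, all at
most `2 * L`. -/
noncomputable def boxPoly (q : ℂ) (s L : ℕ) : ℂ := genFun q (box s (2 * L))

lemma boxPoly_zero_left (q : ℂ) (L : ℕ) : boxPoly q 0 L = 1 := by
  rw [boxPoly, box_zero_left, genFun_singleton_zero]

lemma boxPoly_zero_right (q : ℂ) (s : ℕ) : boxPoly q s 0 = 1 := by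
  rw [boxPoly, mul_zero, box_zero_right, genFun_singleton_zero]

lemma boxPoly_succ_succ (q : ℂ) (s L : ℕ) :
    boxPoly q (s + 1) (L + 1) = boxPoly q (s + 1) L + q ^ (2 * L + 2) * boxPoly q s (L + 1)
      + q ^ (2 * L + 1) * boxPoly q s L := by
  have heven := genFun_box_succ_succ q s (2 * L + 1)
  have hodd := genFun_box_succ_succ q s (2 * L)
  rw [if_neg (by simp)] at heven
  rw [if_pos (by simp)] at hodd
  simp only [boxPoly, mul_add_one]
  linear_combination heven + hodd

-- Eliminating `boxPoly _ _ (L + 1)` from two instances of `boxPoly_succ_succ` makes the double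
-- induction a ring identity.
lemma boxPoly_succ_succ' (q : ℂ) (s L : ℕ) :
    boxPoly q (s + 1) (L + 1) = boxPoly q s (L + 1) + q ^ (2 * s + 2) * boxPoly q (s + 1) L
      + q ^ (2 * s + 1) * boxPoly q s L := by
  induction s generalizing L with
  | zero =>
    induction L with
    | zero => rw [boxPoly_succ_succ]; simp only [boxPoly_zero_left, boxPoly_zero_right]
    | succ L ih =>
      have h := boxPoly_succ_succ q 0 L
      rw [boxPoly_succ_succ q 0 (L + 1)]
      simp only [boxPoly_zero_left] at h ih ⊢
      linear_combination ih - q ^ 2 * h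
  | succ s ihs =>
    induction L with
    | zero =>
      have h1 := boxPoly_succ_succ q (s + 1) 0
      have h2 := boxPoly_succ_succ q s 0
      have h3 := ihs 0
      simp only [boxPoly_zero_right] at *
      linear_combination h1 - h2 + q ^ 2 * h3
    | succ L ih =>
      linear_combination boxPoly_succ_succ q (s + 1) (L + 1) - boxPoly_succ_succ q s (L + 1)
        - q ^ (2 * (s + 1) + 2) * boxPoly_succ_succ q (s + 1) L
        - q ^ (2 * (s + 1) + 1) * boxPoly_succ_succ q s L + ih
        + q ^ (2 * (L + 1) + 2) * ihs (L + 1) + q ^ (2 * (L + 1) + 1) * ihs L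

lemma boxPoly_comm (q : ℂ) (s L : ℕ) : boxPoly q s L = boxPoly q L s := by
  induction s generalizing L with
  | zero => rw [boxPoly_zero_left, boxPoly_zero_right]
  | succ s ihs =>
    induction L with
    | zero => rw [boxPoly_zero_left, boxPoly_zero_right]
    | succ L ih => rw [boxPoly_succ_succ, boxPoly_succ_succ', ih, ihs, ihs]

/-! ### The generating functions of the M2-rank -/

/-- `⌈ℓ/2⌉` for the largest part `ℓ` of `M`, and `0` for the empty partition. -/
def halfSup (M : Multiset ℕ) : ℕ := (M.sup + 1) / 2

/-- The M2-rank of a multiset of parts; on partitions it is `m2Rank` by definition. -/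
def rank (M : Multiset ℕ) : ℤ := halfSup M - M.card

lemma halfSup_le_iff {M : Multiset ℕ} {L : ℕ} : halfSup M ≤ L ↔ ∀ x ∈ M, x ≤ 2 * L := by
  rw [← Multiset.sup_le, halfSup]
  lia

lemma halfSup_zero : halfSup 0 = 0 := by simp [halfSup]

lemma eq_zero_of_halfSup_eq_zero {M : Multiset ℕ} (hM : M ∈ oddDistinct) (h : halfSup M = 0) :
    M = 0 :=
  Multiset.eq_zero_of_forall_notMem fun x hx =>
    hM.1 (Nat.le_zero.1 (halfSup_le_iff.1 h.le x hx) ▸ hx)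

lemma mem_box_two_mul {M : Multiset ℕ} {s L : ℕ} :
    M ∈ box s (2 * L) ↔ M ∈ oddDistinct ∧ M.card ≤ s ∧ halfSup M ≤ L := by
  rw [halfSup_le_iff]; rfl

/-- The nonempty partitions without repeated odd parts of M2-rank at least `m`. The empty partition
is left out so that the relation `genFun_rankGE_eq_mul_rankLE` also holds for `m = 0`. -/
def rankGE (m : ℤ) : Set (Multiset ℕ) := {M ∈ oddDistinct | M ≠ 0 ∧ m ≤ rank M}

/-- The partitions without repeated odd parts of M2-rank at most `m`. -/
def rankLE (m : ℤ) : Set (Multiset ℕ) := {M ∈ oddDistinct | rank M ≤ m}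

lemma rankGE_subset_oddDistinct (m : ℤ) : rankGE m ⊆ oddDistinct := fun _ h => h.1

lemma rankLE_subset_oddDistinct (m : ℤ) : rankLE m ⊆ oddDistinct := fun _ h => h.1

lemma hasSum_congr_fun {ι E : Type*} [AddCommMonoid E] [TopologicalSpace E] {f g : ι → E} {a : E}
    (h : ∀ i, f i = g i) : HasSum f a ↔ HasSum g a := by
  rw [funext h]

section

variable {q : ℂ}

lemma hasSum_boxPoly_sub (hq : ‖q‖ < 1) {A : Set (Multiset ℕ)} (hA : A ⊆ oddDistinct)
    (f : Multiset ℕ → ℕ) (c : ℕ) {s L s' L' : ℕ → ℕ} (hs : ∀ t, s' t ≤ s t) (hL : ∀ t, L' t ≤ L t)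
    (hle : ∀ M ∈ A, c ≤ f M)
    (hfib : ∀ t, ∀ M ∈ oddDistinct, M ∈ A ∧ f M = t + c ↔
      (M.card ≤ s t ∧ halfSup M ≤ L t) ∧ ¬(M.card ≤ s' t ∧ halfSup M ≤ L' t)) :
    HasSum (fun t => boxPoly q (s t) (L t) - boxPoly q (s' t) (L' t)) (genFun q A) := by
  have h := hasSum_genFun_fiber hq hA f
  have hlow : ∑ k ∈ Finset.range c, genFun q {M ∈ A | f M = k} = 0 := by
    refine Finset.sum_eq_zero fun k hk => ?_
    convert genFun_empty q
    refine Set.eq_empty_of_forall_notMem fun M hM => ?_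
    exact (Finset.mem_range.1 hk).not_ge (hM.2 ▸ hle M hM.1)
  rw [← hasSum_nat_add_iff' c, hlow, sub_zero] at h
  refine (hasSum_congr_fun fun t => ?_).2 h
  rw [boxPoly, boxPoly, ← genFun_sdiff hq
    (box_mono (hs t) (Nat.mul_le_mul_left 2 (hL t))) (box_subset_oddDistinct _ _)]
  congr 1
  ext M
  simp only [Set.mem_sdiff, mem_box_two_mul, Set.mem_ofPred_eq]
  by_cases hM : M ∈ oddDistinct
  · simpa only [hM, true_and] using (hfib t M hM).symm
  · simpa only [hM, false_and, false_iff] using fun h => hM (hA h.1)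

lemma hasSum_rankGE (hq : ‖q‖ < 1) (m : ℕ) :
    HasSum (fun t => boxPoly q (t + 1) (t + m + 1) - boxPoly q (t + 1) (t + m))
      (genFun q (rankGE m)) := by
  refine hasSum_boxPoly_sub hq (rankGE_subset_oddDistinct m) halfSup (m + 1) (fun _ => le_rfl)
    (fun _ => Nat.le_succ _) (fun M hM => ?_) fun t M hM => ?_
  · have := Multiset.card_pos.2 hM.2.1
    have := hM.2.2
    simp only [rank] at this
    lia
  · have : M ≠ 0 ∨ halfSup M = 0 := by
      by_cases h : M = 0
      · exact .inr (h ▸ halfSup_zero)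
      · exact .inl h
    simp only [rankGE, rank, Set.mem_ofPred_eq, hM, true_and]
    constructor
    · rintro ⟨_, _⟩; lia
    · rintro ⟨_, _⟩; exact ⟨⟨by lia, by lia⟩, by lia⟩

lemma hasSum_rankLE_neg (hq : ‖q‖ < 1) {m : ℕ} (hm : 1 ≤ m) :
    HasSum (fun t => boxPoly q (t + m + 1) (t + 1) - boxPoly q (t + m) (t + 1))
      (genFun q (rankLE (-m))) := by
  refine hasSum_boxPoly_sub hq (rankLE_subset_oddDistinct _) Multiset.card (m + 1)
    (fun _ => Nat.le_succ _) (fun _ => le_rfl) (fun M hM => ?_) fun t M hM => ?_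
  · have hrank : rank M ≤ -m := hM.2
    have hpos : halfSup M ≠ 0 := fun h => by
      simp only [eq_zero_of_halfSup_eq_zero hM.1 h, rank, halfSup_zero, Multiset.card_zero] at hrank
      lia
    simp only [rank] at hrank
    lia
  · simp only [rankLE, rank, Set.mem_ofPred_eq, hM, true_and]
    lia

lemma genFun_rankLE_neg (hq : ‖q‖ < 1) {m : ℕ} (hm : 1 ≤ m) :
    genFun q (rankLE (-m)) = genFun q (rankGE m) := by
  refine (hasSum_rankLE_neg hq hm).unique ?_
  refine (hasSum_congr_fun fun t => ?_).2 (hasSum_rankGE hq m)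
  rw [boxPoly_comm q (t + m + 1), boxPoly_comm q (t + m)]

lemma hasSum_rankLE (hq : ‖q‖ < 1) (m : ℕ) :
    HasSum (fun t => boxPoly q (t + 1) (t + 1 + m) - boxPoly q t (t + 1 + m))
      (genFun q (rankLE m) - 1) := by
  have hzero : ({0} : Set (Multiset ℕ)) ⊆ rankLE m := by
    rintro _ rfl
    exact ⟨zero_mem_oddDistinct, by simp [rank, halfSup_zero]⟩
  rw [← genFun_singleton_zero q, ← genFun_sdiff hq hzero (rankLE_subset_oddDistinct _)]
  refine hasSum_boxPoly_sub hq (Set.sdiff_subset.trans (rankLE_subset_oddDistinct _))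
    Multiset.card 1 (fun _ => Nat.le_succ _) (fun _ => le_rfl)
    (fun M hM => Multiset.card_pos.2 hM.2) fun t M hM => ?_
  simp only [rankLE, rank, Set.mem_sdiff, Set.mem_ofPred_eq, Set.mem_singleton_iff, hM, true_and,
    ← Multiset.card_eq_zero]
  lia

lemma summable_pow_mul_boxPoly (hq : ‖q‖ < 1) (c : ℕ) (f g : ℕ → ℕ) :
    Summable fun t => q ^ (2 * t + c) * boxPoly q (f t) (g t) := by
  have h2 : ‖q‖ ^ 2 < 1 := pow_lt_one₀ (norm_nonneg _) hq two_ne_zero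
  refine .of_norm_bounded ((summable_geometric_of_lt_one (by positivity) h2).mul_right
    (‖q‖ ^ c * genFun ‖q‖ oddDistinct)) fun t => ?_
  rw [norm_mul, norm_pow, pow_add, pow_mul, mul_assoc]
  gcongr
  exact norm_genFun_le hq (box_subset_oddDistinct _ _)

-- Both sides are evaluated as sums over `t` of boxes: the recursion lowering the largest part is
-- applied on the left, the one lowering the number of parts on the right.
lemma genFun_rankGE_eq_mul_rankLE (hq : ‖q‖ < 1) (m : ℕ) :
    genFun q (rankGE m) = q ^ (2 * m + 1) * genFun q (rankLE ((m + 1 : ℕ) : ℤ)) := by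
  have hodd := (summable_pow_mul_boxPoly hq 1 (fun t => t) (fun t => t + m + 1)).hasSum
  have heven := (summable_pow_mul_boxPoly hq 0 (fun t => t) (fun t => t + m)).hasSum
  have hGE := (hasSum_rankGE hq m).unique <|
    (hasSum_congr_fun fun t => by rw [boxPoly_succ_succ]; ring).2
      ((hodd.add heven).mul_left (q ^ (2 * m + 1)))
  have hLE := (hasSum_rankLE hq (m + 1)).unique <|
    (hasSum_congr_fun fun t => by
      rw [show t + 1 + (m + 1) = (t + m + 1) + 1 by ring, boxPoly_succ_succ',
        show t + 1 + m = t + m + 1 by ring]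
      ring).2 (hodd.add ((hasSum_nat_add_iff' 1).2 heven))
  rw [Finset.sum_range_one, boxPoly_zero_left] at hLE
  linear_combination hGE - q ^ (2 * m + 1) * hLE

lemma genFun_oddDistinct_eq_add (hq : ‖q‖ < 1) (m : ℕ) :
    genFun q oddDistinct = genFun q (rankLE m) + genFun q (rankGE ((m + 1 : ℕ) : ℤ)) := by
  have hsdiff : oddDistinct \ rankLE m = rankGE ((m + 1 : ℕ) : ℤ) := by
    ext M
    simp only [rankLE, rankGE, Set.mem_sdiff, Set.mem_ofPred_eq]
    refine ⟨fun ⟨hM, h⟩ => ⟨hM, ?_, ?_⟩, fun ⟨hM, _, h⟩ =>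
      ⟨hM, fun hle => (Int.lt_iff_add_one_le.2 (mod_cast h)).not_ge hle.2⟩⟩
    · rintro rfl
      exact h ⟨hM, by simp [rank, halfSup_zero]⟩
    · have : ¬rank M ≤ m := fun hle => h ⟨hM, hle⟩
      lia
  rw [← hsdiff, genFun_sdiff hq (rankLE_subset_oddDistinct m) subset_rfl]
  ring

lemma genFun_oddDistinct_eq_one_add (hq : ‖q‖ < 1) :
    genFun q oddDistinct =
      1 + genFun q (rankGE 0) + genFun q (rankLE ((-(1 : ℕ) : ℤ))) := by
  have hzero : rankGE 0 = (oddDistinct \ rankLE (-(1 : ℕ) : ℤ)) \ {0} := by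
    ext M
    simp only [rankLE, rankGE, Set.mem_sdiff, Set.mem_ofPred_eq, Set.mem_singleton_iff]
    grind
  rw [hzero, genFun_sdiff hq _ Set.sdiff_subset, genFun_sdiff hq (rankLE_subset_oddDistinct _)
    subset_rfl, genFun_singleton_zero]
  · ring
  · rintro _ rfl
    exact ⟨zero_mem_oddDistinct, fun h => by simpa [rank, halfSup_zero] using h.2⟩

/-- The partial theta series `∑_{k ≥ 1} (-1)^(k-1) q^(k (2k - 1 + 2m))`, indexed by `j = k - 1`. By
`genFun_rankGE` it is the ratio `genFun q (rankGE m) / genFun q oddDistinct`. -/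
noncomputable def rankSeries (q : ℂ) (m : ℕ) : ℂ :=
  ∑' j : ℕ, (-1) ^ j * q ^ ((j + 1) * (2 * j + 1 + 2 * m))

lemma norm_rankSeries_term_le (hq : ‖q‖ < 1) (m j : ℕ) :
    ‖(-1 : ℂ) ^ j * q ^ ((j + 1) * (2 * j + 1 + 2 * m))‖ ≤ ‖q‖ ^ j := by
  rw [norm_mul, norm_pow, norm_pow, norm_neg, norm_one, one_pow, one_mul]
  refine pow_le_pow_of_le_one (norm_nonneg _) hq.le ?_
  nlinarith [Nat.zero_le (j * m), Nat.zero_le (j * j)]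

lemma summable_rankSeries_term (hq : ‖q‖ < 1) (m : ℕ) :
    Summable fun j : ℕ => (-1 : ℂ) ^ j * q ^ ((j + 1) * (2 * j + 1 + 2 * m)) :=
  .of_norm_bounded (summable_geometric_of_lt_one (norm_nonneg _) hq) (norm_rankSeries_term_le hq m)

lemma norm_rankSeries_le (hq : ‖q‖ < 1) (m : ℕ) : ‖rankSeries q m‖ ≤ (1 - ‖q‖)⁻¹ :=
  tsum_of_norm_bounded (hasSum_geometric_of_lt_one (norm_nonneg _) hq)
    (norm_rankSeries_term_le hq m)

lemma rankSeries_eq_mul_one_sub (hq : ‖q‖ < 1) (m : ℕ) :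
    rankSeries q m = q ^ (2 * m + 1) * (1 - rankSeries q (m + 2)) := by
  rw [rankSeries, (summable_rankSeries_term hq m).tsum_eq_zero_add, mul_sub, rankSeries,
    ← tsum_mul_left, sub_eq_add_neg, ← tsum_neg]
  congr 1
  · ring
  · congr 1
    ext j
    ring

lemma eq_zero_of_norm_le_mul {E ι : Type*} [NormedAddCommGroup E] {D : ι → E} {σ : ι → ι} {r C : ℝ}
    (hr₀ : 0 ≤ r) (hr₁ : r < 1) (hbdd : ∀ i, ‖D i‖ ≤ C) (h : ∀ i, ‖D i‖ ≤ r * ‖D (σ i)‖) (i : ι) :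
    D i = 0 := by
  have hpow (k : ℕ) : ∀ i, ‖D i‖ ≤ r ^ k * C := by
    induction k with
    | zero => simpa using hbdd
    | succ k ih =>
      intro i
      rw [pow_succ', mul_assoc]
      exact (h i).trans (mul_le_mul_of_nonneg_left (ih _) hr₀)
  have hlim := (tendsto_pow_atTop_nhds_zero_of_lt_one hr₀ hr₁).mul_const C
  rw [zero_mul] at hlim
  exact norm_le_zero_iff.1 (ge_of_tendsto' hlim fun k => hpow k i)

lemma genFun_rankGE (hq : ‖q‖ < 1) (m : ℕ) :
    genFun q (rankGE m) = genFun q oddDistinct * rankSeries q m := by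
  set D : ℕ → ℂ := fun m => genFun q (rankGE m) - genFun q oddDistinct * rankSeries q m with hD
  have hrec (m : ℕ) : D m = -q ^ (2 * m + 1) * D (m + 2) := by
    simp only [hD]
    rw [genFun_rankGE_eq_mul_rankLE hq, rankSeries_eq_mul_one_sub hq m]
    linear_combination -q ^ (2 * m + 1) * genFun_oddDistinct_eq_add hq (m + 1)
  refine sub_eq_zero.1 (eq_zero_of_norm_le_mul (D := D) (σ := (· + 2)) (norm_nonneg q) hq
    (C := genFun ‖q‖ oddDistinct + genFun ‖q‖ oddDistinct * (1 - ‖q‖)⁻¹) (fun m => ?_)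
    (fun m => ?_) m)
  · refine (norm_sub_le _ _).trans
      (add_le_add (norm_genFun_le hq (rankGE_subset_oddDistinct _)) ?_)
    rw [norm_mul]
    have hgen := norm_genFun_le hq subset_rfl
    exact mul_le_mul hgen (norm_rankSeries_le hq m) (norm_nonneg _) ((norm_nonneg _).trans hgen)
  · rw [hrec, norm_mul, norm_neg, norm_pow]
    gcongr
    exact pow_le_of_le_one (norm_nonneg _) hq.le (2 * m).succ_ne_zero

lemma genFun_oddDistinct_mul_eq_one (hq : ‖q‖ < 1) :
    genFun q oddDistinct * (1 - rankSeries q 1 - q * (1 - rankSeries q 2)) = 1 := by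
  have h0 := genFun_oddDistinct_eq_one_add hq
  have hdyson := genFun_rankGE_eq_mul_rankLE hq 0
  have h1 := genFun_oddDistinct_eq_add hq 1
  rw [genFun_rankGE hq] at h1
  rw [genFun_rankLE_neg hq le_rfl, genFun_rankGE hq] at h0
  simp only [Nat.cast_zero, zero_add, mul_zero, pow_one, Nat.reduceAdd] at h0 hdyson h1
  linear_combination h0 - q * h1 + hdyson
end

/-! ### Decay of the generating function away from the positive axis -/

section Truncation

variable {R : Type*} [NormedField R] [CompleteSpace R] {q : R}

/-- The partitions without repeated odd parts with all parts at most `N`. -/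
def partsLE (N : ℕ) : Set (Multiset ℕ) := {M ∈ oddDistinct | ∀ x ∈ M, x ≤ N}

lemma partsLE_zero : partsLE 0 = {0} := by
  ext M
  simp only [partsLE, Set.mem_ofPred_eq, Set.mem_singleton_iff, Nat.le_zero]
  refine ⟨fun ⟨hM, h⟩ => ?_, by rintro rfl; simp [zero_mem_oddDistinct]⟩
  exact Multiset.eq_zero_of_forall_notMem fun x hx => hM.1 (h x hx ▸ hx)

lemma tendsto_genFun (hq : ‖q‖ < 1) {A : Set (Multiset ℕ)} {B : ℕ → Set (Multiset ℕ)}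
    (hB : ∀ k, B k ⊆ oddDistinct) (h : ∀ M, ∀ᶠ k in atTop, (M ∈ B k ↔ M ∈ A)) :
    Tendsto (fun k => genFun q (B k)) atTop (𝓝 (genFun q A)) := by
  refine tendsto_tsum_of_dominated_convergence (summable_oddDistinct (norm_nonneg q) hq)
    (fun M => tendsto_const_nhds.congr' ?_) (Eventually.of_forall fun k M => ?_)
  · filter_upwards [h M] with k hk
    simp only [Set.indicator_apply, hk]
  · rw [norm_indicator_pow_sum]
    exact Set.indicator_le_indicator_of_subset (hB k) (fun M => pow_nonneg (norm_nonneg q) _) M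

lemma tendsto_genFun_box (hq : ‖q‖ < 1) (N : ℕ) :
    Tendsto (fun s => genFun q (box s N)) atTop (𝓝 (genFun q (partsLE N))) := by
  refine tendsto_genFun hq (fun s => box_subset_oddDistinct s N) fun M => ?_
  filter_upwards [eventually_ge_atTop M.card] with s hs
  exact ⟨fun h => ⟨h.1, h.2.2⟩, fun h => ⟨h.1, hs, h.2⟩⟩

lemma tendsto_genFun_partsLE (hq : ‖q‖ < 1) :
    Tendsto (fun N => genFun q (partsLE (2 * N))) atTop (𝓝 (genFun q oddDistinct)) := by
  refine tendsto_genFun hq (fun _ _ h => h.1) fun M => ?_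
  filter_upwards [eventually_ge_atTop M.sum] with N hN
  exact ⟨fun h => h.1, fun h => ⟨h, fun x hx => (Multiset.le_sum_of_mem hx).trans (by lia)⟩⟩

lemma genFun_partsLE_succ (hq : ‖q‖ < 1) (N : ℕ) :
    genFun q (partsLE (N + 1)) =
      genFun q (partsLE N) + q ^ (N + 1) * genFun q (partsLE (if Even N then N else N + 1)) := by
  have hshift (K : ℕ) := (tendsto_genFun_box hq K).comp (tendsto_add_atTop_nat 1)
  refine tendsto_nhds_unique (hshift (N + 1)) (((hshift N).add
    ((tendsto_genFun_box hq (if Even N then N else N + 1)).const_mul (q ^ (N + 1)))).congr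
      fun s => ?_)
  exact (genFun_box_succ_succ q s N).symm

lemma genFun_partsLE_two_mul (hq : ‖q‖ < 1) (N : ℕ) :
    genFun q (partsLE (2 * N)) =
      ∏ i ∈ Finset.range N, (1 + q ^ (2 * i + 1)) / (1 - q ^ (2 * i + 2)) := by
  induction N with
  | zero => simp [partsLE_zero, genFun_singleton_zero]
  | succ N ih =>
    have hne : 1 - q ^ (2 * N + 2) ≠ 0 := fun h => by
      have hlt := pow_lt_one₀ (norm_nonneg q) hq (Nat.add_one_ne_zero (2 * N + 1))
      rw [← norm_pow, ← sub_eq_zero.1 h, norm_one] at hlt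
      exact lt_irrefl _ hlt
    have heven := genFun_partsLE_succ hq (2 * N + 1)
    have hodd := genFun_partsLE_succ hq (2 * N)
    rw [if_neg (by simp)] at heven
    rw [if_pos (by simp)] at hodd
    rw [Finset.prod_range_succ, ← ih, mul_div_assoc', eq_div_iff hne, mul_add_one]
    linear_combination heven + hodd

end Truncation

section MinorArc

lemma norm_one_add_le {w : ℂ} (hw : ‖w‖ ≤ 1) :
    ‖1 + w‖ ≤ (1 + ‖w‖) * Real.exp (-(1 / 4) * (‖w‖ - w.re)) := by
  have h0 := norm_nonneg w
  have hre := re_le_norm w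
  have hsq : ‖1 + w‖ ^ 2 = 1 + 2 * w.re + ‖w‖ ^ 2 := by
    rw [← normSq_eq_norm_sq, ← normSq_eq_norm_sq, normSq_add]
    simp
    ring
  refine le_of_sq_le_sq ?_ (by positivity)
  have hexp := mul_le_mul_of_nonneg_left
    (Real.add_one_le_exp ((2 : ℕ) * (-(1 / 4) * (‖w‖ - w.re)))) (sq_nonneg (1 + ‖w‖))
  rw [hsq, mul_pow, ← Real.exp_nat_mul]
  refine le_trans ?_ hexp
  push_cast
  nlinarith [mul_nonneg (sub_nonneg.2 hre) (sub_nonneg.2 hw)]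

lemma norm_genFun_partsLE_le {q : ℂ} (hq : ‖q‖ < 1) (N : ℕ) :
    ‖genFun q (partsLE (2 * N))‖ ≤ genFun ‖q‖ (partsLE (2 * N)) *
      Real.exp (-(1 / 4) * ∑ i ∈ Finset.range N, (‖q‖ ^ (2 * i + 1) - (q ^ (2 * i + 1)).re)) := by
  rw [genFun_partsLE_two_mul hq, genFun_partsLE_two_mul (by simpa using hq), norm_prod,
    Finset.mul_sum, Real.exp_sum, ← Finset.prod_mul_distrib]
  refine Finset.prod_le_prod (fun _ _ => norm_nonneg _) fun i _ => ?_
  have hnum := norm_one_add_le (w := q ^ (2 * i + 1))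
    (by simpa using pow_le_one₀ (norm_nonneg q) hq.le)
  have hden : 1 - ‖q‖ ^ (2 * i + 2) ≤ ‖1 - q ^ (2 * i + 2)‖ := by
    simpa using norm_sub_norm_le 1 (q ^ (2 * i + 2))
  have hpos := one_sub_pow_succ_pos (norm_nonneg q) hq (2 * i + 1)
  rw [norm_pow] at hnum
  rw [norm_div, div_mul_eq_mul_div]
  exact div_le_div₀ (by positivity) hnum hpos hden

lemma hasSum_odd_pow {R : Type*} [NormedField R] {q : R} (hq : ‖q‖ < 1) :
    HasSum (fun i : ℕ => q ^ (2 * i + 1)) (q / (1 - q ^ 2)) := by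
  have h2 : ‖q ^ 2‖ < 1 := by
    simpa using pow_lt_one₀ (norm_nonneg q) hq two_ne_zero
  simpa only [pow_succ _ (2 * _), pow_mul, div_eq_inv_mul] using
    (hasSum_geometric_of_norm_lt_one h2).mul_right q

lemma norm_genFun_oddDistinct_le {q : ℂ} (hq : ‖q‖ < 1) :
    ‖genFun q oddDistinct‖ ≤ genFun ‖q‖ oddDistinct *
      Real.exp (-(1 / 4) * (‖q‖ / (1 - ‖q‖ ^ 2) - (q / (1 - q ^ 2)).re)) := by
  have hq' : ‖(‖q‖ : ℝ)‖ < 1 := by simpa using hq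
  have hsum := ((hasSum_odd_pow hq').sub (hasSum_re (hasSum_odd_pow hq))).tendsto_sum_nat
  exact le_of_tendsto_of_tendsto' (tendsto_genFun_partsLE hq).norm
    ((tendsto_genFun_partsLE hq').mul (hsum.const_mul (-(1 / 4))).rexp) (norm_genFun_partsLE_le hq)

lemma exp_neg_div_one_sub_sq (z : ℂ) :
    exp (-z) / (1 - exp (-z) ^ 2) = (2 * sinh z)⁻¹ := by
  have h : 1 - exp (-z) ^ 2 = exp (-z) * (2 * sinh z) := by
    rw [two_sinh, mul_sub, ← exp_add, ← sq, neg_add_cancel, exp_zero]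
  rw [h, ← div_div, div_self (exp_ne_zero _), one_div]

lemma real_exp_neg_div_one_sub_sq (t : ℝ) :
    Real.exp (-t) / (1 - Real.exp (-t) ^ 2) = (2 * Real.sinh t)⁻¹ :=
  mod_cast exp_neg_div_one_sub_sq t

lemma normSq_sinh_sub_mul_I (t θ : ℝ) :
    normSq (sinh (t - θ * I)) = Real.sinh t ^ 2 + Real.sin θ ^ 2 := by
  have h : sinh (t - θ * I) =
      (Real.sinh t * Real.cos θ : ℝ) + (-(Real.cosh t * Real.sin θ) : ℝ) * I := by
    rw [sinh_sub, sinh_mul_I, cosh_mul_I]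
    push_cast
    ring
  rw [h, normSq_add_mul_I]
  linear_combination Real.sin θ ^ 2 * Real.cosh_sq t + Real.sinh t ^ 2 * Real.sin_sq_add_cos_sq θ

lemma re_sinh_sub_mul_I (t θ : ℝ) : (sinh (t - θ * I)).re = Real.sinh t * Real.cos θ := by
  rw [sinh_sub, sinh_mul_I, cosh_mul_I, ← ofReal_sinh, ← ofReal_cosh, ← ofReal_cos, ← ofReal_sin,
    ← ofReal_mul, ← mul_assoc, ← ofReal_mul, sub_re, re_ofReal_mul, I_re, mul_zero, sub_zero,
    ofReal_re]

lemma re_inv_two_mul_sinh (t θ : ℝ) :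
    ((2 * sinh (t - θ * I))⁻¹).re =
      Real.sinh t * Real.cos θ / (2 * (Real.sinh t ^ 2 + Real.sin θ ^ 2)) := by
  have h : (2 * sinh (t - θ * I))⁻¹ = ((2⁻¹ : ℝ) : ℂ) * (sinh (t - θ * I))⁻¹ := by
    rw [mul_inv]; push_cast; rfl
  rw [h, re_ofReal_mul, inv_re, normSq_sinh_sub_mul_I, re_sinh_sub_mul_I, mul_comm 2, ← div_div]
  ring

lemma sinh_le_two_mul {t : ℝ} (ht₀ : 0 ≤ t) (ht₁ : t ≤ 1) : Real.sinh t ≤ 2 * t := by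
  have hexp : Real.exp t ≤ 1 + t + t ^ 2 := by
    have := (abs_le.1 (Real.abs_exp_sub_one_sub_id_le (by rwa [abs_of_nonneg ht₀]))).2
    linarith
  rw [Real.sinh_eq]
  nlinarith [Real.add_one_le_exp (-t)]

lemma two_fifths_mul_sq_le_sin_sq {θ : ℝ} (hθ : |θ| ≤ π / 2) : 2 / 5 * θ ^ 2 ≤ Real.sin θ ^ 2 := by
  have hsin := pow_le_pow_left₀ (by positivity) (Real.mul_abs_le_abs_sin hθ) 2
  rw [mul_pow, sq_abs, sq_abs, div_pow] at hsin
  refine le_trans (mul_le_mul_of_nonneg_right ?_ (sq_nonneg θ)) hsin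
  rw [div_le_div_iff₀ (by norm_num) (by positivity)]
  nlinarith [Real.pi_lt_d2, Real.pi_gt_three]

-- `x` stands for `sinh t`.
lemma inv_sub_div_sq_add_sin_sq_ge {x t θ : ℝ} (hx : 0 < x) (hxt : x ≤ 2 * t)
    (hθ : |θ| ≤ π / 2) :
    θ ^ 2 / (t * (t ^ 2 + θ ^ 2)) / 40 ≤
      (2 * x)⁻¹ - x * Real.cos θ / (2 * (x ^ 2 + Real.sin θ ^ 2)) := by
  have ht : 0 < t := by linarith
  have hsin := two_fifths_mul_sq_le_sin_sq hθ
  have hpos : 0 < x ^ 2 + Real.sin θ ^ 2 := by positivity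
  have hquot : 1 / 10 * (θ ^ 2 / (t ^ 2 + θ ^ 2)) ≤
      Real.sin θ ^ 2 / (x ^ 2 + Real.sin θ ^ 2) := by
    have hx2 : x ^ 2 ≤ 4 * t ^ 2 := by nlinarith
    rw [← mul_div_assoc, div_le_div_iff₀ (by positivity) hpos]
    nlinarith [sq_nonneg θ, mul_le_mul_of_nonneg_left hx2 (sq_nonneg θ),
      mul_le_mul_of_nonneg_right hsin (sq_nonneg t),
      mul_nonneg (sq_nonneg θ) (sq_nonneg (Real.sin θ))]
  calc θ ^ 2 / (t * (t ^ 2 + θ ^ 2)) / 40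
      = (2 * (2 * t))⁻¹ * (1 / 10 * (θ ^ 2 / (t ^ 2 + θ ^ 2))) := by field_simp; ring
    _ ≤ (2 * x)⁻¹ * (Real.sin θ ^ 2 / (x ^ 2 + Real.sin θ ^ 2)) := by gcongr
    _ = (2 * x)⁻¹ - x * 1 / (2 * (x ^ 2 + Real.sin θ ^ 2)) := by field_simp; ring
    _ ≤ (2 * x)⁻¹ - x * Real.cos θ / (2 * (x ^ 2 + Real.sin θ ^ 2)) := by
      gcongr; exact Real.cos_le_one θ

lemma minorArc_exponent_ge {t θ : ℝ} (ht₀ : 0 < t) (ht₁ : t ≤ 1) (hθ : |θ| ≤ π) :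
    θ ^ 2 / (t * (t ^ 2 + θ ^ 2)) / 40 ≤
      Real.exp (-t) / (1 - Real.exp (-t) ^ 2) -
        (exp (-(t - θ * I)) / (1 - exp (-(t - θ * I)) ^ 2)).re := by
  have hsinh : 0 < Real.sinh t := Real.sinh_pos_iff.2 ht₀
  have hsinh_le := sinh_le_two_mul ht₀.le ht₁
  rw [real_exp_neg_div_one_sub_sq, exp_neg_div_one_sub_sq, re_inv_two_mul_sinh]
  rcases le_or_gt |θ| (π / 2) with hθ' | hθ'
  · exact inv_sub_div_sq_add_sin_sq_ge hsinh hsinh_le hθ'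
  · have hcos : Real.cos θ ≤ 0 := by
      rw [← Real.cos_abs]
      exact Real.cos_nonpos_of_pi_div_two_le_of_le hθ'.le (by linarith [Real.pi_pos])
    calc θ ^ 2 / (t * (t ^ 2 + θ ^ 2)) / 40
        ≤ (2 * (2 * t))⁻¹ := by
          rw [div_div, ← one_div, div_le_div_iff₀ (by positivity) (by positivity)]
          nlinarith [pow_pos ht₀ 3, mul_nonneg ht₀.le (sq_nonneg θ)]
      _ ≤ (2 * Real.sinh t)⁻¹ := by gcongr
      _ ≤ _ := le_sub_self_iff _ |>.2 <| div_nonpos_of_nonpos_of_nonneg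
          (mul_nonpos_of_nonneg_of_nonpos hsinh.le hcos) (by positivity)

end MinorArc

/-! ### The modular transformation -/

section Theta

variable {s : ℂ}

lemma ne_zero_of_re_pos (hs : 0 < s.re) : s ≠ 0 := by
  rintro rfl
  exact lt_irrefl _ hs

lemma norm_exp_neg_lt_one (hs : 0 < s.re) : ‖exp (-s)‖ < 1 := by
  rw [norm_exp]
  simpa using hs

lemma jacobiTheta₂_term_eq_neg_one_zpow (s : ℂ) (n : ℤ) :
    jacobiTheta₂_term n (1 / 2 + I * s / (2 * π)) (2 * I * s / π) =
      (-1) ^ n * exp (-s) ^ (n * (2 * n + 1)) := by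
  have hpi : (π : ℂ) ≠ 0 := ofReal_ne_zero.2 Real.pi_ne_zero
  rw [jacobiTheta₂_term, ← exp_pi_mul_I, ← exp_int_mul, ← exp_int_mul, ← exp_add]
  congr 1
  push_cast
  field_simp
  linear_combination (n * s + 2 * (n : ℂ) ^ 2 * s) * I_sq

lemma hasSum_jacobiTheta₂_term_natCast (hs : 0 < s.re) :
    HasSum (fun n : ℕ => jacobiTheta₂_term (n : ℤ) (1 / 2 + I * s / (2 * π)) (2 * I * s / π))
      (1 - rankSeries (exp (-s)) 1) := by
  simp only [jacobiTheta₂_term_eq_neg_one_zpow]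
  rw [← hasSum_nat_add_iff' 1]
  have h := (summable_rankSeries_term (norm_exp_neg_lt_one hs) 1).hasSum.neg
  simp only [Finset.sum_range_one, Nat.cast_zero, zpow_zero, zero_mul, mul_one, sub_sub_cancel_left]
  refine (hasSum_congr_fun fun j => ?_).2 h
  have hexp : (((j + 1 : ℕ) : ℤ) * (2 * ((j + 1 : ℕ) : ℤ) + 1)) =
      ((j + 1) * (2 * j + 1 + 2 * 1) : ℕ) := by push_cast; ring
  rw [hexp, zpow_natCast, zpow_natCast, pow_succ]
  ring

lemma hasSum_jacobiTheta₂_term_neg (hs : 0 < s.re) :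
    HasSum (fun n : ℕ => jacobiTheta₂_term (-((n : ℤ) + 1))
        (1 / 2 + I * s / (2 * π)) (2 * I * s / π))
      (-exp (-s) * (1 - rankSeries (exp (-s)) 2)) := by
  simp only [jacobiTheta₂_term_eq_neg_one_zpow]
  rw [← hasSum_nat_add_iff' 1]
  have h := (summable_rankSeries_term (norm_exp_neg_lt_one hs) 2).hasSum.mul_left (exp (-s))
  have hlim : -exp (-s) * (1 - rankSeries (exp (-s)) 2) - ∑ i ∈ Finset.range 1,
      (-1) ^ (-((i : ℤ) + 1)) * exp (-s) ^ (-((i : ℤ) + 1) * (2 * -((i : ℤ) + 1) + 1)) =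
      exp (-s) * rankSeries (exp (-s)) 2 := by
    rw [Finset.sum_range_one]
    norm_num
    ring
  rw [hlim]
  refine (hasSum_congr_fun fun j => ?_).2 h
  have hexp : -(((j + 1 : ℕ) : ℤ) + 1) * (2 * -(((j + 1 : ℕ) : ℤ) + 1) + 1) =
      ((j + 1) * (2 * j + 1 + 2 * 2) + 1 : ℕ) := by push_cast; ring
  have hsign : -(((j + 1 : ℕ) : ℤ) + 1) = -((j + 2 : ℕ) : ℤ) := by push_cast; ring
  rw [hexp, hsign, zpow_neg, zpow_natCast, zpow_natCast, ← inv_pow, inv_neg_one, pow_succ _ (_ * _),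
    pow_add _ j 2]
  ring

lemma im_two_mul_I_mul_div_pi_pos (hs : 0 < s.re) : 0 < (2 * I * s / π).im := by
  have h : 2 * I * s / π = ((2 / π : ℝ) : ℂ) * (I * s) := by push_cast; ring
  rw [h, im_ofReal_mul, I_mul_im]
  exact mul_pos (by positivity) hs

lemma genFun_oddDistinct_mul_jacobiTheta₂ (hs : 0 < s.re) :
    genFun (exp (-s)) oddDistinct * jacobiTheta₂ (1 / 2 + I * s / (2 * π)) (2 * I * s / π) = 1 := by
  have hsum := HasSum.of_nat_of_neg_add_one
    (f := fun n : ℤ => jacobiTheta₂_term n (1 / 2 + I * s / (2 * π)) (2 * I * s / π))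
    (hasSum_jacobiTheta₂_term_natCast hs) (hasSum_jacobiTheta₂_term_neg hs)
  have htheta := hsum.unique (hasSum_jacobiTheta₂_term _ (im_two_mul_I_mul_div_pi_pos hs))
  rw [← htheta]
  linear_combination genFun_oddDistinct_mul_eq_one (norm_exp_neg_lt_one hs)

/-- The theta function that the modular transformation produces from the reciprocal of
`genFun (exp (-s)) oddDistinct`. -/
noncomputable def dualTheta (s : ℂ) : ℂ :=
  jacobiTheta₂ (1 / 4 - I * π / (4 * s)) (I * π / (2 * s))

lemma jacobiTheta₂_eq_dualTheta (hs : s ≠ 0) :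
    jacobiTheta₂ (1 / 2 + I * s / (2 * π)) (2 * I * s / π) =
      1 / (2 * s / π) ^ (1 / 2 : ℂ) * exp (-(π ^ 2 / (8 * s)) - I * π / 4 + s / 8) *
        dualTheta s := by
  have hpi : (π : ℂ) ≠ 0 := ofReal_ne_zero.2 Real.pi_ne_zero
  have hI := I_ne_zero
  have hscale : -I * (2 * I * s / π) = 2 * s / π := by
    linear_combination (-2 * s / π) * I_sq
  have harg : (1 / 2 + I * s / (2 * π)) / (2 * I * s / π) = 1 / 4 - I * π / (4 * s) := by
    field_simp
    linear_combination (4 * π) * I_sq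
  have htau : -1 / (2 * I * s / π) = I * π / (2 * s) := by
    field_simp
    linear_combination (-1) * I_sq
  have hexp : -π * I * (1 / 2 + I * s / (2 * π)) ^ 2 / (2 * I * s / π) =
      -(π ^ 2 / (8 * s)) - I * π / 4 + s / 8 := by
    field_simp
    linear_combination (-32 * s ^ 2) * I_sq
  rw [jacobiTheta₂_functional_equation, dualTheta, hscale, harg, htau, hexp]

lemma dualTheta_term (hs : s ≠ 0) (n : ℤ) :
    jacobiTheta₂_term n (1 / 4 - I * π / (4 * s)) (I * π / (2 * s)) =
      I ^ n * exp ((-(π ^ 2 / 2 * (n * (n - 1) : ℤ)) : ℝ) * (1 / s)) := by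
  have hI : I ^ n = exp (n * (π / 2 * I)) := by rw [exp_int_mul, exp_pi_div_two_mul_I]
  rw [jacobiTheta₂_term, hI, ← exp_add]
  congr 1
  push_cast
  field_simp
  linear_combination (-4 * n * π + 4 * n ^ 2 * π) * I_sq

lemma norm_dualTheta_term (hs : s ≠ 0) (n : ℤ) :
    ‖jacobiTheta₂_term n (1 / 4 - I * π / (4 * s)) (I * π / (2 * s))‖ =
      Real.exp (-(π ^ 2 / 2 * (n * (n - 1) : ℤ)) * (1 / s).re) := by
  rw [dualTheta_term hs, norm_mul, norm_zpow, norm_I, one_zpow, one_mul, norm_exp, re_ofReal_mul]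

lemma norm_dualTheta_term_le (hs : s ≠ 0) (hre : 1 ≤ (1 / s).re) (n : ℤ) :
    ‖jacobiTheta₂_term n (1 / 4 - I * π / (4 * s)) (I * π / (2 * s))‖ ≤
      Real.exp 1 * Real.exp (-1) ^ n.natAbs := by
  rw [norm_dualTheta_term hs, ← Real.exp_nat_mul, ← Real.exp_add, Real.exp_le_exp]
  have hnonneg : (0 : ℝ) ≤ (n * (n - 1) : ℤ) := mod_cast by
    rcases le_or_gt n 0 with h | h <;> nlinarith
  have hnatAbs : (n.natAbs : ℝ) - 1 ≤ (n * (n - 1) : ℤ) := by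
    have h : (n.natAbs : ℤ) - 1 ≤ n * (n - 1) := by
      rcases le_or_gt n 0 with h | h
      · rw [Int.ofNat_natAbs_of_nonpos h]; nlinarith
      · rw [Int.natAbs_of_nonneg h.le]; nlinarith
    exact_mod_cast h
  have hpi : 1 ≤ π ^ 2 / 2 := by nlinarith [Real.pi_gt_three]
  nlinarith [le_mul_of_one_le_left hnonneg hpi,
    le_mul_of_one_le_right (mul_nonneg (zero_le_one.trans hpi) hnonneg) hre]

lemma summable_exp_neg_one_pow_natAbs :
    Summable fun n : ℤ => Real.exp 1 * Real.exp (-1) ^ n.natAbs := by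
  have hint : Summable fun n : ℤ => Real.exp (-1) ^ n.natAbs :=
    .of_nat_of_neg (by simp) (by simp)
  exact hint.mul_left _

/-- The generating function at `exp (-s)` divided by `exp (π² / (8 s)) √(2 s / π)`, its leading
behaviour as `s → 0` up to a constant factor. -/
noncomputable def genFunRatio (s : ℂ) : ℂ :=
  genFun (exp (-s)) oddDistinct * exp (-(π ^ 2 / (8 * s))) / (2 * s / π) ^ (1 / 2 : ℂ)

lemma two_mul_div_pi_cpow_ne_zero (hs : s ≠ 0) : (2 * s / π) ^ (1 / 2 : ℂ) ≠ 0 :=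
  cpow_ne_zero_iff.2 <|
    .inl (div_ne_zero (mul_ne_zero two_ne_zero hs) (ofReal_ne_zero.2 Real.pi_ne_zero))

lemma genFun_oddDistinct_eq_genFunRatio (hs : s ≠ 0) : genFun (exp (-s)) oddDistinct =
    genFunRatio s * exp (π ^ 2 / (8 * s)) * (2 * s / π) ^ (1 / 2 : ℂ) := by
  rw [genFunRatio, div_mul_eq_mul_div, div_mul_cancel₀ _ (two_mul_div_pi_cpow_ne_zero hs),
    mul_assoc, ← exp_add, neg_add_cancel, exp_zero, mul_one]

variable {ι : Type*} {l : Filter ι} {s : ι → ℂ}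

lemma tendsto_dualTheta_term (hs : ∀ᶠ i in l, s i ≠ 0)
    (hinv : Tendsto (fun i => (1 / s i).re) l atTop) (n : ℤ) :
    Tendsto (fun i => jacobiTheta₂_term n (1 / 4 - I * π / (4 * s i)) (I * π / (2 * s i))) l
      (𝓝 (if n = 0 then 1 else if n = 1 then I else 0)) := by
  split_ifs with h₀ h₁
  · subst h₀
    simp only [jacobiTheta₂_term, Int.cast_zero, ne_eq, OfNat.ofNat_ne_zero, not_false_eq_true,
      zero_pow, mul_zero, zero_mul, add_zero, exp_zero]
    exact tendsto_const_nhds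
  · subst h₁
    refine tendsto_const_nhds.congr' ?_
    filter_upwards [hs] with i hi
    rw [dualTheta_term hi]
    simp
  · rw [tendsto_zero_iff_norm_tendsto_zero]
    have hpos : (0 : ℝ) < (n * (n - 1) : ℤ) := mod_cast by
      rcases lt_or_gt_of_ne h₀ with h | h
      · nlinarith
      · exact mul_pos h (by lia)
    have hexp := Real.tendsto_exp_atBot.comp (hinv.const_mul_atTop_of_neg
      (neg_neg_of_pos (mul_pos (by positivity : 0 < π ^ 2 / 2) hpos)))
    refine hexp.congr' ?_
    filter_upwards [hs] with i hi
    rw [norm_dualTheta_term hi, Function.comp_apply]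

lemma tendsto_dualTheta (hs : ∀ᶠ i in l, s i ≠ 0)
    (hinv : Tendsto (fun i => (1 / s i).re) l atTop) :
    Tendsto (fun i => dualTheta (s i)) l (𝓝 (1 + I)) := by
  have hlim : ∑' n : ℤ, (if n = 0 then 1 else if n = 1 then I else 0) = 1 + I := by
    rw [tsum_eq_sum (s := {0, 1})]
    · simp
    · intro n hn
      simp only [Finset.mem_insert, Finset.mem_singleton, not_or] at hn
      rw [if_neg hn.1, if_neg hn.2]
  rw [← hlim]
  refine tendsto_tsum_of_dominated_convergence summable_exp_neg_one_pow_natAbs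
    (tendsto_dualTheta_term hs hinv) ?_
  filter_upwards [hs, hinv.eventually_ge_atTop 1] with i hi hi' n
  exact norm_dualTheta_term_le hi hi' n

lemma exp_I_mul_pi_div_four : exp (I * π / 4) = (1 + I) / (√2 : ℝ) := by
  have hsqrt : ((√2 : ℝ) : ℂ) ^ 2 = 2 := by
    rw [← ofReal_pow, Real.sq_sqrt (by norm_num), ofReal_ofNat]
  have hne : ((√2 : ℝ) : ℂ) ≠ 0 := ofReal_ne_zero.2 (by positivity)
  rw [show I * π / 4 = ((π / 4 : ℝ) : ℂ) * I by push_cast; ring, exp_mul_I, ← ofReal_cos,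
    ← ofReal_sin, Real.cos_pi_div_four, Real.sin_pi_div_four, ofReal_div, ofReal_ofNat,
    eq_div_iff hne]
  linear_combination (1 + I) / 2 * hsqrt

lemma tendsto_genFunRatio (hs : ∀ᶠ i in l, 0 < (s i).re) (h₀ : Tendsto s l (𝓝 0))
    (hinv : Tendsto (fun i => (1 / s i).re) l atTop) :
    Tendsto (fun i => genFunRatio (s i)) l (𝓝 (√2 : ℝ)⁻¹) := by
  have hI : (1 + I : ℂ) ≠ 0 := fun h => by simpa using congrArg re h
  have htheta := tendsto_dualTheta (hs.mono fun _ => ne_zero_of_re_pos) hinv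
  have hlim := ((tendsto_const_nhds (x := I * π / 4)).sub (h₀.div_const 8)).cexp.div htheta hI
  rw [zero_div, sub_zero, exp_I_mul_pi_div_four, div_div_cancel_left' hI] at hlim
  refine hlim.congr' ?_
  filter_upwards [hs, htheta.eventually_ne hI] with i hi hθ
  have hroot := two_mul_div_pi_cpow_ne_zero (ne_zero_of_re_pos hi)
  have hexp : exp (-(π ^ 2 / (8 * s i)) - I * π / 4 + s i / 8) =
      exp (-(π ^ 2 / (8 * s i))) / exp (I * π / 4 - s i / 8) := by
    rw [← exp_sub]; congr 1; ring
  have hone := genFun_oddDistinct_mul_jacobiTheta₂ hi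
  rw [jacobiTheta₂_eq_dualTheta (ne_zero_of_re_pos hi), hexp] at hone
  have hcancel := congrArg₂ (· * ·) (mul_inv_cancel₀ (exp_ne_zero (I * π / 4 - s i / 8)))
    (mul_inv_cancel₀ hroot)
  rw [genFunRatio, Pi.div_apply, div_eq_div_iff hθ hroot]
  linear_combination -(exp (I * π / 4 - s i / 8) * (2 * s i / π) ^ (1 / 2 : ℂ)) * hone +
    genFun (exp (-s i)) oddDistinct * exp (-(π ^ 2 / (8 * s i))) * dualTheta (s i) * hcancel

end Theta

/-! ### The generating function of the moments -/

/-- The increment `(i + 1) ^ p - i ^ p`, which serves for summation by parts. -/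
def powDiff (p i : ℕ) : ℕ := (i + 1) ^ p - i ^ p

lemma cast_powDiff {R : Type*} [Ring R] (p i : ℕ) :
    (powDiff p i : R) = ((i + 1 : ℕ) : R) ^ p - (i : R) ^ p := by
  rw [powDiff, Nat.cast_sub (Nat.pow_le_pow_left i.le_succ p), Nat.cast_pow, Nat.cast_pow]

lemma sum_powDiff {R : Type*} [Ring R] {p : ℕ} (hp : p ≠ 0) (a : ℕ) :
    ∑ i ∈ Finset.range a, (powDiff p i : R) = (a : R) ^ p := by
  simp only [cast_powDiff]
  rw [Finset.sum_range_sub fun i : ℕ => (i : R) ^ p, Nat.cast_zero, zero_pow hp, sub_zero]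

lemma natAbs_rank_le_sum {M : Multiset ℕ} (hM : M ∈ oddDistinct) : (rank M).natAbs ≤ M.sum := by
  have hcard := card_le_sum_of_mem_oddDistinct hM
  have hhalf : halfSup M ≤ M.sum := halfSup_le_iff.2 fun x hx => by
    have := Multiset.le_sum_of_mem hx
    lia
  rw [rank]
  lia

/-- The partitions without repeated odd parts whose M2-rank exceeds `i` in absolute value. -/
def absRankGT (i : ℕ) : Set (Multiset ℕ) := {M ∈ oddDistinct | i < (rank M).natAbs}

lemma absRankGT_eq_union (i : ℕ) :
    absRankGT i = rankGE ((i + 1 : ℕ) : ℤ) ∪ rankLE (-((i + 1 : ℕ) : ℤ)) := by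
  ext M
  have hne : ((i + 1 : ℕ) : ℤ) ≤ rank M → M ≠ 0 := by
    rintro h rfl
    simp only [rank, halfSup_zero, Multiset.card_zero] at h
    lia
  simp only [absRankGT, rankGE, rankLE, Set.mem_union, Set.mem_ofPred_eq]
  grind

lemma genFun_absRankGT {q : ℂ} (hq : ‖q‖ < 1) (i : ℕ) :
    genFun q (absRankGT i) = 2 * genFun q oddDistinct * rankSeries q (i + 1) := by
  have hdisj : Disjoint (rankGE ((i + 1 : ℕ) : ℤ)) (rankLE (-((i + 1 : ℕ) : ℤ))) :=
    Set.disjoint_left.2 fun M hGE hLE => by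
      have := hGE.2.2.trans hLE.2
      lia
  rw [absRankGT_eq_union, genFun_union (summable_indicator hq (rankGE_subset_oddDistinct _))
    (summable_indicator hq (rankLE_subset_oddDistinct _)) hdisj, genFun_rankLE_neg hq i.succ_pos,
    genFun_rankGE hq]
  ring

lemma exists_pow_mul_pow_le (p : ℕ) {ρ : ℝ} (hρ₀ : 0 ≤ ρ) (hρ₁ : ρ < 1) :
    ∃ C, ∀ n : ℕ, (n : ℝ) ^ p * ρ ^ n ≤ C := by
  have hsum : Summable fun n : ℕ => (n : ℝ) ^ p * ρ ^ n :=
    summable_pow_mul_geometric_of_norm_lt_one p (by rwa [Real.norm_of_nonneg hρ₀])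
  obtain ⟨C, hC⟩ := hsum.tendsto_atTop_zero.bddAbove_range
  exact ⟨C, fun n => hC ⟨n, rfl⟩⟩

-- Half of the decay `ρ ^ |M| = √ρ ^ |M| * √ρ ^ |M|` absorbs the power of the rank.
lemma summable_natAbs_rank_pow (p : ℕ) {ρ : ℝ} (hρ₀ : 0 ≤ ρ) (hρ₁ : ρ < 1) :
    Summable (oddDistinct.indicator fun M => ((rank M).natAbs : ℝ) ^ p * ρ ^ M.sum) := by
  have hsqrt : √ρ < 1 := by rwa [Real.sqrt_lt' one_pos, one_pow]
  obtain ⟨C, hC⟩ := exists_pow_mul_pow_le p (Real.sqrt_nonneg ρ) hsqrt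
  refine ((summable_oddDistinct (Real.sqrt_nonneg ρ) hsqrt).mul_left C).of_nonneg_of_le
    (fun M => Set.indicator_nonneg (fun _ _ => by positivity) M) fun M => ?_
  by_cases hM : M ∈ oddDistinct
  · have hsplit : ρ ^ M.sum = √ρ ^ M.sum * √ρ ^ M.sum := by
      rw [← mul_pow, Real.mul_self_sqrt hρ₀]
    rw [Set.indicator_of_mem hM, Set.indicator_of_mem hM, hsplit, ← mul_assoc]
    gcongr
    refine le_trans ?_ (hC M.sum)
    gcongr
    exact_mod_cast natAbs_rank_le_sum hM
  · simp [hM]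

section MomentSeries

variable {R : Type*} [NormedField R]

/-- The generating function of the `p`-th absolute moments of the M2-rank; for even `p` these are
the moments `N2moment`. -/
noncomputable def momentSeries (q : R) (p : ℕ) : R :=
  ∑' M, oddDistinct.indicator (fun M => ((rank M).natAbs : R) ^ p * q ^ M.sum) M

lemma hasSum_powDiff_mul_indicator {p : ℕ} (hp : p ≠ 0) (q : R) (M : Multiset ℕ) :
    HasSum (fun i => (powDiff p i : R) * (absRankGT i).indicator (fun M => q ^ M.sum) M)
      (oddDistinct.indicator (fun M => ((rank M).natAbs : R) ^ p * q ^ M.sum) M) := by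
  by_cases hM : M ∈ oddDistinct
  · have h := hasSum_sum_of_ne_finset_zero (L := .unconditional ℕ)
      (s := Finset.range (rank M).natAbs)
      (f := fun i => (powDiff p i : R) * (absRankGT i).indicator (fun M => q ^ M.sum) M)
      fun i hi => by
        rw [Set.indicator_of_notMem fun h => hi (Finset.mem_range.2 h.2), mul_zero]
    rw [Finset.sum_congr rfl fun i hi => by
      rw [Set.indicator_of_mem (show M ∈ absRankGT i from ⟨hM, Finset.mem_range.1 hi⟩)]] at h
    rwa [Set.indicator_of_mem hM, ← sum_powDiff hp, Finset.sum_mul]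
  · rw [Set.indicator_of_notMem hM]
    refine (hasSum_congr_fun fun i => ?_).2 hasSum_zero
    rw [Set.indicator_of_notMem fun h => hM h.1, mul_zero]

lemma momentSeries_eq_tsum_powDiff [CompleteSpace R] {q : R} (hq : ‖q‖ < 1) {p : ℕ} (hp : p ≠ 0)
    (hcast : ∀ n : ℕ, ‖(n : R)‖ = n) :
    momentSeries q p = ∑' i, (powDiff p i : R) * genFun q (absRankGT i) := by
  set F : Multiset ℕ → ℕ → R := fun M i =>
    (powDiff p i : R) * (absRankGT i).indicator (fun M => q ^ M.sum) M with hF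
  have hnorm (M : Multiset ℕ) : HasSum (fun i => ‖F M i‖)
      (oddDistinct.indicator (fun M => ((rank M).natAbs : ℝ) ^ p * ‖q‖ ^ M.sum) M) := by
    simp only [hF, norm_mul, hcast, norm_indicator_pow_sum]
    exact hasSum_powDiff_mul_indicator hp ‖q‖ M
  have hsum : Summable (Function.uncurry F) := by
    refine .of_norm ((summable_prod_of_nonneg fun _ => norm_nonneg _).2
      ⟨fun M => (hnorm M).summable, ?_⟩)
    exact (summable_natAbs_rank_pow p (norm_nonneg q) hq).congr fun M => (hnorm M).tsum_eq.symm
  calc momentSeries q p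
      = ∑' M, ∑' i, F M i :=
        tsum_congr fun M => (hasSum_powDiff_mul_indicator hp q M).tsum_eq.symm
    _ = ∑' i, ∑' M, F M i := hsum.tsum_comm.symm
    _ = ∑' i, (powDiff p i : R) * genFun q (absRankGT i) := tsum_congr fun i => tsum_mul_left

end MomentSeries

/-- The series `∑ m ^ p * x ^ m`, the polylogarithm of order `-p`. -/
noncomputable def powSeries (p : ℕ) (x : ℂ) : ℂ := ∑' m : ℕ, (m : ℂ) ^ p * x ^ m

lemma hasSum_powSeries (p : ℕ) {x : ℂ} (hx : ‖x‖ < 1) :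
    HasSum (fun m : ℕ => (m : ℂ) ^ p * x ^ m) (powSeries p x) :=
  (summable_pow_mul_geometric_of_norm_lt_one p hx).hasSum

lemma hasSum_powSeries_succ {p : ℕ} (hp : p ≠ 0) {x : ℂ} (hx : ‖x‖ < 1) :
    HasSum (fun m : ℕ => ((m + 1 : ℕ) : ℂ) ^ p * x ^ (m + 1)) (powSeries p x) := by
  simpa [hp] using (hasSum_nat_add_iff' 1).2 (hasSum_powSeries p hx)

lemma hasSum_powDiff_mul_pow {p : ℕ} (hp : p ≠ 0) {x : ℂ} (hx : ‖x‖ < 1) :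
    HasSum (fun i : ℕ => (powDiff p i : ℂ) * x ^ (i + 1)) ((1 - x) * powSeries p x) := by
  rw [sub_mul, one_mul]
  refine (hasSum_congr_fun fun i => ?_).2
    ((hasSum_powSeries_succ hp hx).sub ((hasSum_powSeries p hx).mul_left x))
  rw [cast_powDiff]
  ring

/-- The `j`-th term of the series `momentQuotient`. -/
noncomputable def momentTerm (q : ℂ) (p j : ℕ) : ℂ :=
  (-1) ^ j * q ^ ((j + 1) * (2 * j + 1)) *
    ((1 - q ^ (2 * (j + 1))) * powSeries p (q ^ (2 * (j + 1))))

/-- The quotient of the `p`-th moment generating function by `2 * genFun q oddDistinct`, as an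
alternating series. -/
noncomputable def momentQuotient (q : ℂ) (p : ℕ) : ℂ := ∑' j, momentTerm q p j

lemma tsum_powDiff_mul_rankSeries {q : ℂ} (hq : ‖q‖ < 1) {p : ℕ} (hp : p ≠ 0) :
    ∑' i, (powDiff p i : ℂ) * rankSeries q (i + 1) = momentQuotient q p := by
  set F : ℕ → ℕ → ℂ := fun i j =>
    (powDiff p i : ℂ) * ((-1) ^ j * q ^ ((j + 1) * (2 * j + 1 + 2 * (i + 1)))) with hF
  have hsum : Summable (Function.uncurry F) := by
    have hdiff : Summable fun i : ℕ => (powDiff p i : ℝ) * ‖q‖ ^ (i + 1) :=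
      (hasSum_powDiff_mul_pow hp hq).summable.norm.congr fun i => by simp
    refine .of_norm_bounded (hdiff.mul_of_nonneg
      (summable_geometric_of_lt_one (norm_nonneg q) hq) (fun _ => by positivity)
      fun _ => by positivity) fun ⟨i, j⟩ => ?_
    simp only [hF, Function.uncurry, norm_mul, norm_pow, norm_neg, norm_one, one_pow, one_mul,
      norm_natCast]
    rw [mul_assoc, ← pow_add]
    refine mul_le_mul_of_nonneg_left (pow_le_pow_of_le_one (norm_nonneg q) hq.le ?_)
      (by positivity)
    nlinarith [Nat.zero_le (j * i), Nat.zero_le (j * j)]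
  calc ∑' i, (powDiff p i : ℂ) * rankSeries q (i + 1)
      = ∑' i, ∑' j, F i j := tsum_congr fun i => tsum_mul_left.symm
    _ = ∑' j, ∑' i, F i j := hsum.tsum_comm.symm
    _ = momentQuotient q p := tsum_congr fun j => ?_
  have hx : ‖q ^ (2 * (j + 1))‖ < 1 := by
    rw [norm_pow]
    exact pow_lt_one₀ (norm_nonneg q) hq (by lia)
  rw [momentTerm, ← (hasSum_powDiff_mul_pow hp hx).tsum_eq, ← tsum_mul_left]
  exact tsum_congr fun i => by ring

lemma momentSeries_eq {q : ℂ} (hq : ‖q‖ < 1) {p : ℕ} (hp : p ≠ 0) :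
    momentSeries q p = 2 * genFun q oddDistinct * momentQuotient q p := by
  rw [momentSeries_eq_tsum_powDiff hq hp Complex.norm_natCast, ← tsum_powDiff_mul_rankSeries hq hp,
    ← tsum_mul_left]
  refine tsum_congr fun i => ?_
  rw [genFun_absRankGT hq]
  ring

/-! ### The alternating series of the moments near one -/

lemma powDiff_succ_le (p i : ℕ) : powDiff (p + 1) i ≤ (p + 1).factorial * (i + p).choose p := by
  have hdiff : (powDiff (p + 1) i : ℝ) ≤ ((p + 1) * (i + 1) ^ p : ℕ) := by
    have h := abs_pow_sub_pow_le ((i + 1 : ℕ) : ℝ) (i : ℝ) (p + 1)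
    rw [cast_powDiff]
    refine (le_abs_self _).trans (h.trans_eq ?_)
    push_cast
    rw [abs_of_nonneg (show (0 : ℝ) ≤ i + 1 by positivity), Nat.abs_cast,
      max_eq_left (by linarith), add_sub_cancel_left, abs_one, one_mul]
  calc powDiff (p + 1) i ≤ (p + 1) * (i + 1) ^ p := by exact_mod_cast hdiff
    _ ≤ (p + 1) * (i + 1).ascFactorial p := by
        gcongr
        exact Nat.pow_succ_le_ascFactorial _ _
    _ = (p + 1).factorial * (i + p).choose p := by
        rw [Nat.ascFactorial_eq_factorial_mul_choose, Nat.factorial_succ, mul_assoc]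

lemma norm_one_sub_mul_powSeries_le {p : ℕ} (hp : p ≠ 0) {x : ℂ} (hx : ‖x‖ < 1) :
    ‖(1 - x) * powSeries p x‖ ≤ p.factorial / (1 - ‖x‖) ^ p := by
  obtain ⟨p, rfl⟩ := Nat.exists_eq_succ_of_ne_zero hp
  have hgeom := (hasSum_choose_mul_geometric_of_norm_lt_one p (r := ‖x‖)
    (by rwa [norm_norm])).mul_left ((p + 1).factorial : ℝ)
  rw [mul_one_div] at hgeom
  rw [← (hasSum_powDiff_mul_pow hp hx).tsum_eq]
  refine tsum_of_norm_bounded hgeom fun i => ?_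
  rw [norm_mul, norm_pow, Complex.norm_natCast, ← mul_assoc]
  gcongr ?_ * ?_
  · exact_mod_cast powDiff_succ_le p i
  · exact pow_le_pow_of_le_one (norm_nonneg x) hx.le i.le_succ

lemma one_sub_mul_powSeries {p : ℕ} (hp : p ≠ 0) {x : ℂ} (hx : ‖x‖ < 1) :
    (1 - x) * powSeries p x =
      x * ∑ i ∈ Finset.range p, (p.choose i : ℂ) * powSeries i x := by
  have hbinom : HasSum (fun m : ℕ => ((m + 1 : ℕ) : ℂ) ^ p * x ^ (m + 1))
      (x * ∑ i ∈ Finset.range (p + 1), (p.choose i : ℂ) * powSeries i x) := by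
    refine (hasSum_congr_fun fun m => ?_).2
      ((hasSum_sum fun i _ => (hasSum_powSeries i hx).mul_left (p.choose i : ℂ)).mul_left x)
    rw [Nat.cast_succ, add_pow, Finset.mul_sum, Finset.sum_mul]
    exact Finset.sum_congr rfl fun i _ => by ring
  have h := (hasSum_powSeries_succ hp hx).unique hbinom
  rw [Finset.sum_range_succ, Nat.choose_self] at h
  linear_combination h

lemma one_sub_pow_mul_powSeries_succ (p : ℕ) {x : ℂ} (hx : ‖x‖ < 1) :
    (1 - x) ^ (p + 2) * powSeries (p + 1) x =
      x * ∑ i ∈ Finset.range (p + 1), ((p + 1).choose i : ℂ) *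
        ((1 - x) ^ (p - i) * ((1 - x) ^ (i + 1) * powSeries i x)) := by
  rw [pow_succ, mul_assoc, one_sub_mul_powSeries p.succ_ne_zero hx, mul_left_comm, Finset.mul_sum]
  congr 1
  refine Finset.sum_congr rfl fun i hi => ?_
  have hexp : p + 1 = p - i + (i + 1) := by
    have := Finset.mem_range.1 hi
    lia
  rw [mul_left_comm, ← mul_assoc ((1 - x) ^ (p - i)), ← pow_add, ← hexp]

lemma tendsto_one_sub_pow_mul_powSeries (p : ℕ) :
    Tendsto (fun x : ℂ => (1 - x) ^ (p + 1) * powSeries p x) (𝓝[Metric.ball 0 1] 1)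
      (𝓝 p.factorial) := by
  induction p using Nat.strong_induction_on with
  | _ p ih =>
    rcases p with _ | p
    · refine tendsto_const_nhds.congr' ?_
      filter_upwards [self_mem_nhdsWithin] with x hx
      have hx : ‖x‖ < 1 := by simpa using hx
      have hne : 1 - x ≠ 0 := sub_ne_zero.2 fun h => by simp [← h] at hx
      simp [powSeries, tsum_geometric_of_norm_lt_one hx, hne]
    · have hid : Tendsto (fun x : ℂ => x) (𝓝[Metric.ball 0 1] 1) (𝓝 1) :=
        tendsto_id.mono_left nhdsWithin_le_nhds
      have hlim := hid.mul (tendsto_finsetSum (Finset.range (p + 1)) fun i hi =>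
        (((tendsto_const_nhds (x := (1 : ℂ)).sub hid).pow (p - i)).mul
          (ih i (Finset.mem_range.1 hi))).const_mul ((p + 1).choose i : ℂ))
      have hval : 1 * ∑ i ∈ Finset.range (p + 1),
          ((p + 1).choose i : ℂ) * ((1 - 1) ^ (p - i) * (i.factorial : ℂ)) =
            (p + 1).factorial := by
        rw [Finset.sum_range_succ, Finset.sum_eq_zero fun i hi => ?_]
        · simp [Nat.factorial_succ]
        · have := Finset.mem_range.1 hi
          rw [sub_self, zero_pow (by lia), zero_mul, mul_zero]
      rw [hval] at hlim
      refine hlim.congr' ?_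
      filter_upwards [self_mem_nhdsWithin] with x hx
      exact (one_sub_pow_mul_powSeries_succ p (by simpa using hx)).symm

lemma div_one_sub_exp_neg_le {k t : ℝ} (hk : 0 < k) (ht : 0 < t) :
    t / (1 - Real.exp (-(k * t))) ≤ 1 / k + t := by
  have : 0 < k * t := mul_pos hk ht
  have hexp : Real.exp (-(k * t)) ≤ 1 / (1 + k * t) := by
    rw [Real.exp_neg, ← one_div]
    exact one_div_le_one_div_of_le (by positivity) (by linarith [Real.add_one_le_exp (k * t)])
  have hle : k * t / (1 + k * t) ≤ 1 - Real.exp (-(k * t)) := by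
    have : k * t / (1 + k * t) = 1 - 1 / (1 + k * t) := by
      field_simp
      ring
    linarith
  calc t / (1 - Real.exp (-(k * t))) ≤ t / (k * t / (1 + k * t)) := by gcongr
    _ = 1 / k + t := by field_simp

lemma exp_neg_mul_mul_add_le {k t : ℝ} (hk : 0 < k) (ht : 0 ≤ t) :
    Real.exp (-(t * k)) * (1 / k + t) ≤ 2 * (1 / k) := by
  have hone : Real.exp (-(t * k)) ≤ 1 := Real.exp_le_one_iff.2 (by linarith [mul_nonneg ht hk.le])
  have hlin : Real.exp (-(t * k)) * t ≤ 1 / k := by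
    rw [Real.exp_neg, inv_mul_le_iff₀ (Real.exp_pos _), mul_one_div, le_div_iff₀ hk]
    linarith [Real.add_one_le_exp (t * k)]
  have : Real.exp (-(t * k)) * (1 / k) ≤ 1 / k := mul_le_of_le_one_left (by positivity) hone
  linarith

lemma add_pow_le_two_pow_mul {p : ℕ} (hp : 2 ≤ p) {a t : ℝ} (ha₀ : 0 ≤ a) (ha₁ : a ≤ 1)
    (ht₀ : 0 ≤ t) (ht₁ : t ≤ 1) : (a + t) ^ p ≤ 2 ^ p * (a ^ 2 + t) := by
  refine (add_pow_le ha₀ ht₀ p).trans ?_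
  have htp : t ^ p ≤ t := pow_le_of_le_one ht₀ ht₁ (by lia)
  have hap : a ^ p ≤ a ^ 2 := pow_le_pow_of_le_one ha₀ ha₁ hp
  have htwo : (2 : ℝ) ^ (p - 1) ≤ 2 ^ p := pow_le_pow_right₀ one_le_two (by lia)
  gcongr

lemma norm_pow_eq_exp {q : ℂ} {t : ℝ} (hq : ‖q‖ = Real.exp (-t)) (j : ℕ) :
    ‖q ^ (2 * (j + 1))‖ = Real.exp (-(2 * (j + 1) * t)) := by
  rw [norm_pow, hq, ← Real.exp_nat_mul]
  push_cast
  ring_nf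

lemma norm_pow_lt_one_of_exp {q : ℂ} {t : ℝ} (ht : 0 < t) (hq : ‖q‖ = Real.exp (-t)) (j : ℕ) :
    ‖q ^ (2 * (j + 1))‖ < 1 := by
  rw [norm_pow_eq_exp hq, Real.exp_lt_one_iff, neg_lt_zero]
  positivity

lemma norm_pow_mul_momentTerm_le {p : ℕ} (hp : 2 ≤ p) {q : ℂ} {t : ℝ} (ht₀ : 0 < t) (ht₁ : t ≤ 1)
    (hq : ‖q‖ = Real.exp (-t)) (j : ℕ) :
    ‖(t : ℂ) ^ p * momentTerm q p j‖ ≤ p.factorial * 2 ^ (p + 1) * (1 / ((j : ℝ) + 1) ^ 2) := by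
  have hx := norm_pow_lt_one_of_exp ht₀ hq j
  have hseries := norm_one_sub_mul_powSeries_le (by lia : p ≠ 0) hx
  set x := q ^ (2 * (j + 1)) with hxdef
  set k : ℝ := (j : ℝ) + 1 with hk
  have hk₁ : 1 ≤ k := by simp [hk]
  have hgauss : ‖q ^ ((j + 1) * (2 * j + 1))‖ ≤ Real.exp (-(t * k ^ 2)) := by
    rw [norm_pow, hq, ← Real.exp_nat_mul, Real.exp_le_exp, hk]
    have : 0 ≤ t * ((j : ℝ) + 1) * j := by positivity
    push_cast
    nlinarith
  have hquot : t / (1 - ‖x‖) ≤ 1 / k + t := by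
    rw [hxdef, norm_pow_eq_exp hq]
    refine (div_one_sub_exp_neg_le (by positivity) ht₀).trans ?_
    gcongr
    linarith
  have hpow : (t / (1 - ‖x‖)) ^ p ≤ 2 ^ p * (1 / k ^ 2 + t) := by
    rw [← one_div_pow]
    exact (pow_le_pow_left₀ (div_nonneg ht₀.le (by linarith)) hquot p).trans
      (add_pow_le_two_pow_mul hp (by positivity) (div_le_one_of_le₀ hk₁ (by positivity)) ht₀.le ht₁)
  calc ‖(t : ℂ) ^ p * momentTerm q p j‖
      = t ^ p * (‖q ^ ((j + 1) * (2 * j + 1))‖ * ‖(1 - x) * powSeries p x‖) := by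
        rw [momentTerm, norm_mul, norm_mul, norm_mul, norm_pow, norm_pow (-1 : ℂ), norm_neg,
          norm_one, one_pow, one_mul, Complex.norm_real, Real.norm_of_nonneg ht₀.le]
    _ ≤ t ^ p * (Real.exp (-(t * k ^ 2)) * (p.factorial / (1 - ‖x‖) ^ p)) := by gcongr
    _ = p.factorial * Real.exp (-(t * k ^ 2)) * (t / (1 - ‖x‖)) ^ p := by
        rw [div_pow]
        ring
    _ ≤ p.factorial * Real.exp (-(t * k ^ 2)) * (2 ^ p * (1 / k ^ 2 + t)) := by gcongr
    _ = p.factorial * 2 ^ p * (Real.exp (-(t * k ^ 2)) * (1 / k ^ 2 + t)) := by ring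
    _ ≤ p.factorial * 2 ^ p * (2 * (1 / k ^ 2)) :=
        mul_le_mul_of_nonneg_left (exp_neg_mul_mul_add_le (by positivity) ht₀.le) (by positivity)
    _ = p.factorial * 2 ^ (p + 1) * (1 / k ^ 2) := by ring

lemma summable_one_div_add_one_sq : Summable fun j : ℕ => 1 / ((j : ℝ) + 1) ^ 2 := by
  simpa using (summable_nat_add_iff 1).2 (Real.summable_one_div_nat_pow.2 one_lt_two)

lemma exists_norm_pow_mul_momentQuotient_le {p : ℕ} (hp : 2 ≤ p) :
    ∃ C : ℝ, 0 ≤ C ∧ ∀ (q : ℂ) (t : ℝ), 0 < t → t ≤ 1 → ‖q‖ = Real.exp (-t) →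
      ‖(t : ℂ) ^ p * momentQuotient q p‖ ≤ C := by
  refine ⟨∑' j : ℕ, p.factorial * 2 ^ (p + 1) * (1 / ((j : ℝ) + 1) ^ 2),
    tsum_nonneg fun _ => by positivity, fun q t ht₀ ht₁ hq => ?_⟩
  rw [momentQuotient, ← tsum_mul_left]
  exact tsum_of_norm_bounded (summable_one_div_add_one_sq.mul_left _).hasSum
    fun j => norm_pow_mul_momentTerm_le hp ht₀ ht₁ hq j

lemma tendsto_one_sub_exp_neg_pow_div (N : ℕ) :
    Tendsto (fun s : ℂ => (1 - exp (-s) ^ N) / s) (𝓝[≠] 0) (𝓝 N) := by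
  have hderiv : HasDerivAt (fun s : ℂ => exp (-s) ^ N) (-(N : ℂ)) 0 := by
    simpa using (hasDerivAt_neg (0 : ℂ)).cexp.fun_pow N
  have hslope := (hasDerivAt_iff_tendsto_slope.1 hderiv).neg
  rw [neg_neg] at hslope
  refine hslope.congr fun s => ?_
  simp only [slope_def_field, neg_zero, exp_zero, one_pow, sub_zero]
  ring

section MomentQuotientLimit

variable {ι : Type*} {l : Filter ι} {s : ι → ℂ} {p : ℕ}

lemma tendsto_pow_mul_momentTerm (hs : ∀ᶠ i in l, 0 < (s i).re) (h₀ : Tendsto s l (𝓝 0))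
    (hr : Tendsto (fun i => ((s i).re : ℂ) / s i) l (𝓝 1)) (j : ℕ) :
    Tendsto (fun i => ((s i).re : ℂ) ^ p * momentTerm (exp (-s i)) p j) l
      (𝓝 ((-1) ^ j * (p.factorial * (1 / (2 * ((j : ℂ) + 1))) ^ p))) := by
  have hne : ∀ᶠ i in l, s i ≠ 0 := hs.mono fun i hi => ne_zero_of_re_pos hi
  have hlt : ∀ᶠ i in l, ‖exp (-s i) ^ (2 * (j + 1))‖ < 1 := hs.mono fun i hi => by
    rw [norm_pow]
    exact pow_lt_one₀ (norm_nonneg _) (norm_exp_neg_lt_one hi) (by lia)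
  have hexp : Tendsto (fun i => exp (-s i)) l (𝓝 1) := by simpa using h₀.neg.cexp
  have hx : Tendsto (fun i => exp (-s i) ^ (2 * (j + 1))) l (𝓝[Metric.ball 0 1] 1) :=
    tendsto_nhdsWithin_iff.2 ⟨by simpa using hexp.pow (2 * (j + 1)),
      hlt.mono fun i hi => mem_ball_zero_iff.2 hi⟩
  have hslope := (tendsto_one_sub_exp_neg_pow_div (2 * (j + 1))).comp
    (tendsto_nhdsWithin_iff.2 ⟨h₀, hne⟩)
  have hquot := (hr.div hslope (Nat.cast_ne_zero.2 (by lia))).pow p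
  have hlim := ((hexp.pow ((j + 1) * (2 * j + 1))).mul
    (((tendsto_one_sub_pow_mul_powSeries p).comp hx).mul hquot)).const_mul ((-1 : ℂ) ^ j)
  rw [one_pow, one_mul] at hlim
  push_cast at hlim
  refine hlim.congr' ?_
  filter_upwards [hne, hlt] with i hi hi'
  have hsub : 1 - exp (-s i) ^ (2 * (j + 1)) ≠ 0 :=
    sub_ne_zero.2 fun h => by simp [← h] at hi'
  simp only [momentTerm, Function.comp, Pi.div_apply]
  generalize exp (-s i) ^ (2 * (j + 1)) = x at *
  rw [div_div_div_cancel_right₀ hi, div_pow, pow_succ]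
  have := pow_ne_zero p hsub
  field_simp

lemma tendsto_pow_mul_momentQuotient (hp : 2 ≤ p) (hs : ∀ᶠ i in l, 0 < (s i).re)
    (h₀ : Tendsto s l (𝓝 0)) (hr : Tendsto (fun i => ((s i).re : ℂ) / s i) l (𝓝 1)) :
    Tendsto (fun i => ((s i).re : ℂ) ^ p * momentQuotient (exp (-s i)) p) l
      (𝓝 (∑' j : ℕ, (-1) ^ j * (p.factorial * (1 / (2 * ((j : ℂ) + 1))) ^ p))) := by
  simp only [momentQuotient, ← tsum_mul_left]
  have hre : Tendsto (fun i => (s i).re) l (𝓝 0) := (continuous_re.tendsto 0).comp h₀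
  refine tendsto_tsum_of_dominated_convergence
    (summable_one_div_add_one_sq.mul_left (p.factorial * 2 ^ (p + 1) : ℝ))
    (fun j => tendsto_pow_mul_momentTerm hs h₀ hr j) ?_
  filter_upwards [hs, hre.eventually (ge_mem_nhds one_pos)] with i hi hi₁ j
  exact norm_pow_mul_momentTerm_le hp hi hi₁ (by simp [norm_exp]) j

end MomentQuotientLimit

section BernoulliHalf

variable {k : ℕ}

lemma hasSum_neg_one_pow_div_pow (hk : k ≠ 0) :
    HasSum (fun j : ℕ => (-1 : ℝ) ^ j * (1 / ((j : ℝ) + 1) ^ (2 * k)))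
      ((-1) ^ k * (2 * π) ^ (2 * k) / 2 / (2 * k).factorial *
        (((Polynomial.bernoulli (2 * k)).eval (1 / 2 : ℚ) : ℚ) : ℝ)) := by
  have h := hasSum_one_div_nat_pow_mul_cos hk (x := 1 / 2) (by constructor <;> norm_num)
  rw [show (1 / 2 : ℝ) = algebraMap ℚ ℝ (1 / 2) by norm_num, Polynomial.eval_map_apply,
    eq_ratCast, eq_ratCast, ← hasSum_nat_add_iff' 1] at h
  have hneg := h.neg
  rw [Finset.sum_range_one, Nat.cast_zero, zero_pow (by lia), div_zero, zero_mul, sub_zero,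
    pow_succ (-1 : ℝ) k, mul_neg_one, neg_mul, neg_div, neg_div, neg_mul, neg_neg] at hneg
  refine (hasSum_congr_fun fun j => ?_).2 hneg
  have hcos : 2 * π * ((j + 1 : ℕ) : ℝ) * ((1 / 2 : ℚ) : ℝ) = ((j + 1 : ℕ) : ℝ) * π := by
    push_cast
    ring
  rw [hcos, Real.cos_nat_mul_pi, pow_succ]
  push_cast
  ring

lemma two_mul_tsum_neg_one_pow_mul_factorial (hk : k ≠ 0) :
    2 * (∑' j : ℕ, (-1 : ℂ) ^ j * ((2 * k).factorial * (1 / (2 * ((j : ℂ) + 1))) ^ (2 * k))) =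
      (((-1 : ℝ) ^ k * π ^ (2 * k) *
        (((Polynomial.bernoulli (2 * k)).eval (1 / 2 : ℚ) : ℚ) : ℝ) : ℝ) : ℂ) := by
  have h := (hasSum_neg_one_pow_div_pow hk).mul_left (2 * ((2 * k).factorial / 2 ^ (2 * k)) : ℝ)
  have hvalue (b : ℝ) : (2 * ((2 * k).factorial / 2 ^ (2 * k)) : ℝ) *
      ((-1) ^ k * (2 * π) ^ (2 * k) / 2 / (2 * k).factorial * b) = (-1) ^ k * π ^ (2 * k) * b := by
    rw [mul_pow 2 π]
    field_simp
  rw [hvalue, ← hasSum_ofReal] at h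
  rw [← h.tsum_eq, ← tsum_mul_left]
  refine tsum_congr fun j => ?_
  have : (j : ℂ) + 1 ≠ 0 := Nat.cast_add_one_ne_zero j
  push_cast
  rw [one_div_pow, mul_pow]
  field_simp

lemma eval_bernoulli_half_ne_zero (hk : k ≠ 0) :
    (((Polynomial.bernoulli (2 * k)).eval (1 / 2 : ℚ) : ℚ) : ℝ) ≠ 0 := by
  intro hzero
  have h := hasSum_neg_one_pow_div_pow hk
  rw [hzero, mul_zero] at h
  have hanti : Antitone fun j : ℕ => 1 / ((j : ℝ) + 1) ^ (2 * k) := fun a b hab => by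
    beta_reduce
    gcongr
  have hpartial := hanti.alternating_series_le_tendsto h.tendsto_sum_nat 1
  have hlt : ((2 : ℝ) ^ (2 * k))⁻¹ < 1 := inv_lt_one_of_one_lt₀ (one_lt_pow₀ one_lt_two (by lia))
  norm_num [Finset.sum_range_succ] at hpartial
  linarith

end BernoulliHalf

/-! ### Coefficient extraction -/

/-- The `p`-th absolute moment of the M2-rank over the partitions of `n` without repeated odd
parts. -/
noncomputable def absMoment (p n : ℕ) : ℕ :=
  ∑ P : n.Partition, if NoRepeatedOddParts P then (rank P.parts).natAbs ^ p else 0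

lemma N2exact_eq_sum (m : ℤ) (n : ℕ) : N2exact m n =
    ∑ P : n.Partition, if NoRepeatedOddParts P ∧ m2Rank P = m then 1 else 0 := by
  rw [N2exact, Nat.card_eq_fintype_card, Fintype.card_subtype, Finset.card_filter]

lemma N2moment_eq_absMoment (ℓ n : ℕ) : N2moment ℓ n = absMoment (2 * ℓ) n := by
  have hterm (m : ℤ) : m ^ (2 * ℓ) * (N2exact m n : ℤ) = ∑ P : n.Partition,
      if m = m2Rank P then if NoRepeatedOddParts P then m2Rank P ^ (2 * ℓ) else 0 else 0 := by
    rw [N2exact_eq_sum, Nat.cast_sum, Finset.mul_sum]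
    refine Finset.sum_congr rfl fun P _ => ?_
    by_cases h : m = m2Rank P
    · simp [h]
    · simp [h, Ne.symm h]
  have hpow (P : n.Partition) :
      m2Rank P ^ (2 * ℓ) = (((rank P.parts).natAbs ^ (2 * ℓ) : ℕ) : ℤ) := by
    rw [Nat.cast_pow, Int.natCast_natAbs, (even_two_mul ℓ).pow_abs]
    rfl
  rw [N2moment, tsum_congr hterm, Summable.tsum_finsetSum fun P _ => (hasSum_ite_eq _ _).summable,
    absMoment, Nat.cast_sum]
  refine Finset.sum_congr rfl fun P _ => ?_
  rw [tsum_ite_eq, hpow, Nat.cast_ite, Nat.cast_zero]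

lemma parts_mem_oddDistinct {n : ℕ} {P : n.Partition} :
    P.parts ∈ oddDistinct ↔ NoRepeatedOddParts P :=
  ⟨fun h => h.2, fun h => ⟨fun h₀ => lt_irrefl 0 (P.parts_pos h₀), h⟩⟩

lemma summable_momentSeries {q : ℂ} (hq : ‖q‖ < 1) (p : ℕ) :
    Summable (oddDistinct.indicator fun M => ((rank M).natAbs : ℂ) ^ p * q ^ M.sum) := by
  refine .of_norm ((summable_natAbs_rank_pow p (norm_nonneg q) hq).congr fun M => ?_)
  rw [norm_indicator_eq_indicator_norm]
  simp only [norm_mul, norm_pow, Complex.norm_natCast]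

lemma tsum_fiber_sum_eq {f : Multiset ℕ → ℂ} (hf : ∀ M, 0 ∈ M → f M = 0) (n : ℕ) :
    ∑' M : Multiset.sum ⁻¹' {n}, f M = ∑ P : n.Partition, f P.parts := by
  let toFiber (P : n.Partition) : Multiset.sum ⁻¹' {n} := ⟨P.parts, P.parts_sum⟩
  have hinj : Function.Injective toFiber := fun P Q h =>
    Nat.Partition.ext (congrArg Subtype.val h)
  rw [← hinj.tsum_eq (f := fun M : Multiset.sum ⁻¹' {n} => f M), tsum_fintype]
  rintro ⟨M, hM⟩ hMs
  exact ⟨⟨M, fun {i} hi => Nat.pos_of_ne_zero fun h₀ => hMs (hf M (h₀ ▸ hi)), hM⟩, rfl⟩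

lemma hasSum_momentSeries {q : ℂ} (hq : ‖q‖ < 1) (p : ℕ) :
    HasSum (fun n : ℕ => (absMoment p n : ℂ) * q ^ n) (momentSeries q p) := by
  refine (hasSum_congr_fun fun n => ?_).2
    ((summable_momentSeries hq p).hasSum.tsum_fiberwise Multiset.sum)
  rw [tsum_fiber_sum_eq (f := oddDistinct.indicator _) fun M h₀ =>
      Set.indicator_of_notMem (fun hM => hM.1 h₀) _, absMoment, Nat.cast_sum, Finset.sum_mul]
  refine Finset.sum_congr rfl fun P _ => ?_
  simp only [Set.indicator_apply, parts_mem_oddDistinct, P.parts_sum, Nat.cast_ite, Nat.cast_pow,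
    Nat.cast_zero, ite_mul, zero_mul]

lemma integral_exp_int_mul_I (k : ℤ) :
    ∫ θ in (-π)..π, exp ((k : ℂ) * I * θ) = if k = 0 then (2 * π : ℂ) else 0 := by
  split_ifs with h
  · simp only [h, Int.cast_zero, zero_mul, exp_zero, intervalIntegral.integral_const,
      sub_neg_eq_add, real_smul, mul_one]
    push_cast
    ring
  · have hperiod : exp ((k : ℂ) * I * π) = exp ((k : ℂ) * I * (-π : ℝ)) := by
      rw [exp_eq_exp_iff_exists_int]
      refine ⟨k, ?_⟩
      push_cast
      ring
    rw [integral_exp_mul_complex (mul_ne_zero (Int.cast_ne_zero.2 h) I_ne_zero), hperiod, sub_self,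
      zero_div]

lemma integral_coeff_mul_exp (a : ℂ) (m n : ℕ) (t : ℝ) :
    ∫ θ in (-π)..π, a * exp (-(t - θ * I)) ^ m * exp (n * (t - θ * I)) =
      if m = n then 2 * π * a else 0 := by
  have hsplit (θ : ℝ) : a * exp (-(t - θ * I)) ^ m * exp (n * (t - θ * I)) =
      a * exp (((n : ℂ) - m) * t) * exp (((m - n : ℤ) : ℂ) * I * θ) := by
    rw [← exp_nat_mul, mul_assoc, mul_assoc, ← exp_add, ← exp_add]
    push_cast
    ring_nf
  simp only [hsplit]
  rw [intervalIntegral.integral_const_mul, integral_exp_int_mul_I]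
  by_cases hmn : m = n
  · simp only [hmn, sub_self, zero_mul, exp_zero, if_true]
    ring
  · rw [if_neg hmn, if_neg (by lia), mul_zero]

lemma integral_mul_exp_eq_coeff {a : ℕ → ℂ} {f : ℂ → ℂ}
    (hf : ∀ q : ℂ, ‖q‖ < 1 → HasSum (fun m => a m * q ^ m) (f q)) (n : ℕ) {t : ℝ} (ht : 0 < t) :
    ∫ θ in (-π)..π, f (exp (-(t - θ * I))) * exp (n * (t - θ * I)) = 2 * π * a n := by
  have hnorm (θ : ℝ) : ‖exp (-((t : ℂ) - θ * I))‖ = Real.exp (-t) := by simp [norm_exp]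
  have hlt : Real.exp (-t) < 1 := by simpa using ht
  have hsummable : Summable fun m => ‖a m‖ * Real.exp (-t) ^ m * Real.exp (n * t) := by
    refine ((hf (Real.exp (-t)) ?_).summable.norm.mul_right (Real.exp (n * t))).congr fun m => ?_
    · rwa [norm_real, Real.norm_of_nonneg (Real.exp_pos _).le]
    · rw [norm_mul, norm_pow, norm_real, Real.norm_of_nonneg (Real.exp_pos _).le]
  have hsum := intervalIntegral.hasSum_integral_of_dominated_convergence
    (μ := MeasureTheory.volume) (a := -π) (b := π)
    (F := fun m θ => a m * exp (-(t - θ * I)) ^ m * exp (n * (t - θ * I)))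
    (fun m _ => ‖a m‖ * Real.exp (-t) ^ m * Real.exp (n * t))
    (fun m => (by fun_prop : Continuous _).aestronglyMeasurable)
    (fun m => .of_forall fun θ _ => le_of_eq (by simp [norm_exp]))
    (.of_forall fun _ _ => hsummable) (by simp)
    (.of_forall fun θ _ => (hf _ (by rwa [hnorm])).mul_right (exp (n * (t - θ * I))))
  simp only [integral_coeff_mul_exp] at hsum
  refine hsum.unique ((hasSum_congr_fun fun m => ?_).2 (hasSum_ite_eq n (2 * π * a n)))
  split_ifs with h
  · rw [h]
  · rfl

/-! ### The saddle-point limit -/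

section Arc

variable {t v : ℝ}

/-- The point `t - θ I` of the circle of integration with angle `θ = t ^ (3 / 2) * v`: on this scale
the saddle-point integrand converges to a Gaussian in `v`. -/
noncomputable def arcPoint (t v : ℝ) : ℂ := t - ((t * √t * v : ℝ) : ℂ) * I

/-- The ratio of `arcPoint t v` to its real part `t`. -/
noncomputable def arcRatio (t v : ℝ) : ℂ := 1 - ((√t * v : ℝ) : ℂ) * I

/-- The values of `v` for which the angle of `arcPoint t v` lies in `(-π, π]`. -/
def arcWindow (t : ℝ) : Set ℝ := Set.Ioc (-(π / (t * √t))) (π / (t * √t))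

lemma arcPoint_eq_mul_arcRatio (t v : ℝ) : arcPoint t v = t * arcRatio t v := by
  rw [arcPoint, arcRatio]
  push_cast
  ring

lemma arcPoint_re (t v : ℝ) : (arcPoint t v).re = t := by simp [arcPoint]

lemma arcPoint_zero (t : ℝ) : arcPoint t 0 = t := by simp [arcPoint]

lemma arcRatio_ne_zero (t v : ℝ) : arcRatio t v ≠ 0 := fun h => by
  simpa [arcRatio] using congrArg re h

lemma norm_exp_neg_arcPoint (t v : ℝ) : ‖exp (-arcPoint t v)‖ = Real.exp (-t) := by
  rw [norm_exp, neg_re, arcPoint_re]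

lemma norm_exp_neg_arcPoint_lt_one (ht : 0 < t) (v : ℝ) : ‖exp (-arcPoint t v)‖ < 1 :=
  norm_exp_neg_lt_one (by rwa [arcPoint_re])

lemma continuous_arcPoint (t : ℝ) : Continuous (arcPoint t) := by
  unfold arcPoint
  fun_prop

lemma tendsto_arcRatio (v : ℝ) : Tendsto (arcRatio · v) (𝓝[>] 0) (𝓝 1) := by
  have hcont : Continuous (arcRatio · v) := by unfold arcRatio; fun_prop
  simpa [arcRatio] using (hcont.tendsto 0).mono_left nhdsWithin_le_nhds

lemma tendsto_arcPoint (v : ℝ) : Tendsto (arcPoint · v) (𝓝[>] 0) (𝓝 0) := by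
  have hcont : Continuous (arcPoint · v) := by unfold arcPoint; fun_prop
  simpa [arcPoint] using (hcont.tendsto 0).mono_left nhdsWithin_le_nhds

lemma eventually_arcPoint_re_pos (v : ℝ) : ∀ᶠ t in 𝓝[>] (0 : ℝ), 0 < (arcPoint t v).re := by
  filter_upwards [self_mem_nhdsWithin] with t ht
  rwa [arcPoint_re]

lemma tendsto_arcPoint_re_div (v : ℝ) :
    Tendsto (fun t => ((arcPoint t v).re : ℂ) / arcPoint t v) (𝓝[>] 0) (𝓝 1) := by
  have hlim := (tendsto_arcRatio v).inv₀ one_ne_zero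
  rw [inv_one] at hlim
  refine hlim.congr' ?_
  filter_upwards [self_mem_nhdsWithin] with t ht
  rw [arcPoint_re, arcPoint_eq_mul_arcRatio, div_mul_cancel_left₀ (ofReal_ne_zero.2 ht.ne')]

lemma tendsto_one_div_arcPoint_re (v : ℝ) :
    Tendsto (fun t => (1 / arcPoint t v).re) (𝓝[>] 0) atTop := by
  have hlim := (continuous_re.tendsto _).comp ((tendsto_arcRatio v).inv₀ one_ne_zero)
  rw [inv_one, one_re] at hlim
  refine (tendsto_inv_nhdsGT_zero.atTop_mul_pos one_pos hlim).congr fun t => ?_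
  rw [Function.comp_apply, ← re_ofReal_mul, arcPoint_eq_mul_arcRatio, ofReal_inv, one_div, mul_inv]

lemma mul_sqrt_self_pos (ht : 0 < t) : 0 < t * √t := mul_pos ht (Real.sqrt_pos.2 ht)

lemma abs_arc_angle_le (ht : 0 < t) (hv : v ∈ arcWindow t) : |t * √t * v| ≤ π := by
  rw [abs_mul, abs_of_pos (mul_sqrt_self_pos ht), mul_comm, ← le_div_iff₀ (mul_sqrt_self_pos ht),
    abs_le]
  exact ⟨hv.1.le, hv.2⟩

lemma eventually_mem_arcWindow (v : ℝ) : ∀ᶠ t in 𝓝[>] (0 : ℝ), v ∈ arcWindow t := by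
  have hcont : Continuous fun t : ℝ => |t * √t * v| := by fun_prop
  have hlim := (hcont.tendsto 0).mono_left (nhdsWithin_le_nhds (s := Set.Ioi (0 : ℝ)))
  simp only [zero_mul, abs_zero] at hlim
  filter_upwards [self_mem_nhdsWithin, hlim.eventually (gt_mem_nhds Real.pi_pos)] with t ht hvt
  have hd := mul_sqrt_self_pos ht
  rw [abs_mul, abs_of_pos hd, mul_comm, ← lt_div_iff₀ hd, abs_lt] at hvt
  exact ⟨hvt.1, hvt.2.le⟩

lemma one_add_pow_three_le {x y : ℝ} (hx : 1 ≤ x) (hy : 0 ≤ y) (hyx : y ^ 3 ≤ 10 * x ^ 2) :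
    (1 + y) ^ 3 ≤ 44 * x ^ 2 :=
  calc (1 + y) ^ 3 ≤ 2 ^ (3 - 1) * (1 ^ 3 + y ^ 3) := add_pow_le zero_le_one hy 3
    _ = 4 + 4 * y ^ 3 := by ring
    _ ≤ 44 * x ^ 2 := by nlinarith

lemma exp_neg_div_le {x y : ℝ} (hx : 0 ≤ x) (hy : 0 ≤ y) (hyx : y ^ 3 ≤ 10 * x ^ 2) :
    Real.exp (-(x / (160 * (1 + y)))) ≤ 3 * 10 ^ 10 * (1 + x)⁻¹ := by
  rw [← div_eq_mul_inv, le_div_iff₀ (by positivity)]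
  rcases le_total x 1 with hx₁ | hx₁
  · have hexp : Real.exp (-(x / (160 * (1 + y)))) ≤ 1 :=
      Real.exp_le_one_iff.2 (neg_nonpos.2 (by positivity))
    nlinarith
  · set E := x / (160 * (1 + y)) with hE
    have hx_le : x ≤ 44 * 160 ^ 3 * E ^ 3 := by
      rw [hE, div_pow, mul_pow, mul_div_assoc', le_div_iff₀ (by positivity)]
      nlinarith [mul_le_mul_of_nonneg_left (one_add_pow_three_le hx₁ hy hyx) hx]
    have hcubic : E ^ 3 / 6 ≤ Real.exp E := Real.pow_div_factorial_le_exp E (by positivity) 3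
    rw [Real.exp_neg, inv_mul_le_iff₀ (Real.exp_pos E)]
    linarith

lemma norm_genFun_arcPoint_le (ht₀ : 0 < t) (ht₁ : t ≤ 1) (hv : v ∈ arcWindow t) :
    ‖genFun (exp (-arcPoint t v)) oddDistinct‖ ≤
      genFun (Real.exp (-t)) oddDistinct * (3 * 10 ^ 10 * (1 + v ^ 2)⁻¹) := by
  have hangle := abs_arc_angle_le ht₀ hv
  have hangle_sq : (t * √t * v) ^ 2 = t ^ 3 * v ^ 2 := by
    rw [mul_pow, mul_pow, Real.sq_sqrt ht₀.le]
    ring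
  have hscale : (t * v ^ 2) ^ 3 ≤ 10 * (v ^ 2) ^ 2 :=
    calc (t * v ^ 2) ^ 3 = (t * √t * v) ^ 2 * (v ^ 2) ^ 2 := by rw [hangle_sq]; ring
      _ ≤ π ^ 2 * (v ^ 2) ^ 2 := by
        exact mul_le_mul_of_nonneg_right (sq_le_sq.2 (by rwa [abs_of_pos Real.pi_pos]))
          (by positivity)
      _ ≤ 10 * (v ^ 2) ^ 2 := by
        gcongr
        nlinarith [Real.pi_lt_d2, Real.pi_pos]
  have hexponent : (t * √t * v) ^ 2 / (t * (t ^ 2 + (t * √t * v) ^ 2)) / 40 =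
      4 * (v ^ 2 / (160 * (1 + t * v ^ 2))) := by
    rw [hangle_sq]
    have : 0 < 1 + t * v ^ 2 := by positivity
    field_simp
    ring
  have hbound := norm_genFun_oddDistinct_le (norm_exp_neg_arcPoint_lt_one ht₀ v)
  have hminor := minorArc_exponent_ge ht₀ ht₁ hangle
  rw [norm_exp_neg_arcPoint] at hbound
  rw [hexponent, ← arcPoint] at hminor
  refine hbound.trans (mul_le_mul_of_nonneg_left ?_ ?_)
  · refine le_trans (Real.exp_le_exp.2 ?_) (exp_neg_div_le (sq_nonneg v) (by positivity) hscale)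
    linarith
  · exact tsum_nonneg (indicator_pow_sum_nonneg (Real.exp_pos _).le _)

end Arc

section SaddlePoint

variable {t v : ℝ} {p : ℕ}

/-- The integrand of Cauchy's formula for the coefficient `n = π ^ 2 / (8 * t ^ 2)` of
`momentSeries · p` at `arcPoint t v`, divided by its order of magnitude as `t → 0`. -/
noncomputable def saddleIntegrand (p : ℕ) (t v : ℝ) : ℂ :=
  t ^ p * momentSeries (exp (-arcPoint t v)) p *
    exp (π ^ 2 / (8 * t ^ 2) * arcPoint t v - π ^ 2 / (4 * t)) / (√(2 * t / π) : ℝ)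

lemma ofReal_mul_cpow_half {r : ℝ} (hr : 0 < r) {z : ℂ} (hz : z ≠ 0) :
    ((r : ℂ) * z) ^ (1 / 2 : ℂ) = (√r : ℝ) * z ^ (1 / 2 : ℂ) := by
  have hr₀ : (r : ℂ) ≠ 0 := ofReal_ne_zero.2 hr.ne'
  rw [cpow_def_of_ne_zero (mul_ne_zero hr₀ hz), log_ofReal_mul hr hz, add_mul, exp_add,
    ← cpow_def_of_ne_zero hz, ofReal_log hr.le, ← cpow_def_of_ne_zero hr₀, Real.sqrt_eq_rpow,
    ofReal_cpow hr.le]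
  push_cast
  rfl

-- Both exponents are stationary at `s = t`, so their sum is quadratic in `s - t = -t √t v I`.
lemma saddle_exponent_eq (ht : 0 < t) (v : ℝ) :
    π ^ 2 / (8 * arcPoint t v) + (π ^ 2 / (8 * t ^ 2) * arcPoint t v - π ^ 2 / (4 * t)) =
      -(π ^ 2 / 8 * v ^ 2) / arcRatio t v := by
  have ht₀ : (t : ℂ) ≠ 0 := ofReal_ne_zero.2 ht.ne'
  have hu := arcRatio_ne_zero t v
  have hsq : (arcRatio t v - 1) ^ 2 = -(t * v ^ 2) := by
    rw [arcRatio, sub_sub_cancel_left, neg_sq, mul_pow, I_sq, ← ofReal_pow, mul_pow,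
      Real.sq_sqrt ht.le]
    push_cast
    ring
  rw [arcPoint_eq_mul_arcRatio]
  generalize arcRatio t v = u at *
  field_simp
  linear_combination 4 * hsq

lemma saddleIntegrand_eq (hp : p ≠ 0) (ht : 0 < t) (v : ℝ) : saddleIntegrand p t v =
    2 * genFunRatio (arcPoint t v) * exp (-(π ^ 2 / 8 * v ^ 2) / arcRatio t v) *
      arcRatio t v ^ (1 / 2 : ℂ) *
      (((arcPoint t v).re : ℂ) ^ p * momentQuotient (exp (-arcPoint t v)) p) := by
  have hr : 0 < 2 * t / π := by positivity
  have hsqrt : ((√(2 * t / π) : ℝ) : ℂ) ≠ 0 := ofReal_ne_zero.2 (Real.sqrt_pos.2 hr).ne'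
  have hpoint : 2 * arcPoint t v / π = ((2 * t / π : ℝ) : ℂ) * arcRatio t v := by
    rw [arcPoint_eq_mul_arcRatio]
    push_cast
    ring
  rw [saddleIntegrand, momentSeries_eq (norm_exp_neg_arcPoint_lt_one ht v) hp,
    genFun_oddDistinct_eq_genFunRatio (ne_zero_of_re_pos (by rwa [arcPoint_re])), hpoint,
    ofReal_mul_cpow_half hr (arcRatio_ne_zero t v), ← saddle_exponent_eq ht v, exp_add,
    arcPoint_re, div_eq_iff hsqrt]
  ring

lemma tendsto_saddleIntegrand (hp : 2 ≤ p) (v : ℝ) :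
    Tendsto (saddleIntegrand p · v) (𝓝[>] 0) (𝓝 (2 * ((√2 : ℝ) : ℂ)⁻¹ *
      exp (-(π ^ 2 / 8 * v ^ 2)) *
      ∑' j : ℕ, (-1) ^ j * (p.factorial * (1 / (2 * ((j : ℂ) + 1))) ^ p))) := by
  have hpos := eventually_arcPoint_re_pos v
  have hratio := tendsto_genFunRatio hpos (tendsto_arcPoint v) (tendsto_one_div_arcPoint_re v)
  have hgauss := ((tendsto_const_nhds (x := -((π : ℂ) ^ 2 / 8 * v ^ 2))).div (tendsto_arcRatio v)
    one_ne_zero).cexp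
  have hroot := (continuousAt_cpow_const (a := (1 : ℂ)) (b := (1 / 2 : ℂ))
    one_mem_slitPlane).tendsto.comp (tendsto_arcRatio v)
  have hquot := tendsto_pow_mul_momentQuotient hp hpos (tendsto_arcPoint v)
    (tendsto_arcPoint_re_div v)
  have hlim := (((hratio.const_mul 2).mul hgauss).mul hroot).mul hquot
  rw [div_one, one_cpow, mul_one] at hlim
  refine hlim.congr' ?_
  filter_upwards [self_mem_nhdsWithin] with t ht
  exact (saddleIntegrand_eq (by lia) ht v).symm

lemma ofReal_genFun (ρ : ℝ) (A : Set (Multiset ℕ)) : ((genFun ρ A : ℝ) : ℂ) = genFun (ρ : ℂ) A := by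
  rw [genFun, genFun, ofReal_tsum]
  refine tsum_congr fun M => ?_
  by_cases hM : M ∈ A
  · simp [hM]
  · simp [hM]

lemma norm_genFunRatio_ofReal (ht : 0 < t) : ‖genFunRatio t‖ =
    genFun (Real.exp (-t)) oddDistinct * Real.exp (-(π ^ 2 / (8 * t))) / √(2 * t / π) := by
  have hr : 0 < 2 * t / π := by positivity
  have hroot : (2 * (t : ℂ) / π) ^ (1 / 2 : ℂ) = (√(2 * t / π) : ℝ) := by
    simpa using ofReal_mul_cpow_half hr one_ne_zero
  have hreal : genFunRatio t = ((genFun (Real.exp (-t)) oddDistinct *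
      Real.exp (-(π ^ 2 / (8 * t))) / √(2 * t / π) : ℝ) : ℂ) := by
    rw [genFunRatio, hroot, ofReal_div, ofReal_mul, ofReal_genFun]
    push_cast
    rfl
  rw [hreal, norm_real, Real.norm_of_nonneg]
  have : 0 ≤ genFun (Real.exp (-t)) oddDistinct :=
    tsum_nonneg (indicator_pow_sum_nonneg (Real.exp_pos _).le _)
  positivity

lemma norm_exp_saddle_eq (ht : 0 < t) (v : ℝ) :
    ‖exp (π ^ 2 / (8 * t ^ 2) * arcPoint t v - π ^ 2 / (4 * t))‖ =
      Real.exp (-(π ^ 2 / (8 * t))) := by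
  have hcast : (π : ℂ) ^ 2 / (8 * t ^ 2) * arcPoint t v - π ^ 2 / (4 * t) =
      ((π ^ 2 / (8 * t ^ 2) : ℝ) : ℂ) * arcPoint t v - ((π ^ 2 / (4 * t) : ℝ) : ℂ) := by
    push_cast
    rfl
  rw [hcast, norm_exp, sub_re, re_ofReal_mul, arcPoint_re, ofReal_re]
  congr 1
  field_simp
  ring

lemma norm_saddleIntegrand_le (hp : p ≠ 0) (ht₀ : 0 < t) (ht₁ : t ≤ 1) (hv : v ∈ arcWindow t) :
    ‖saddleIntegrand p t v‖ ≤ ‖genFunRatio t‖ * (3 * 10 ^ 10 * (1 + v ^ 2)⁻¹) *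
      (2 * ‖(t : ℂ) ^ p * momentQuotient (exp (-arcPoint t v)) p‖) := by
  have hfactor : saddleIntegrand p t v =
      genFun (exp (-arcPoint t v)) oddDistinct *
      exp (π ^ 2 / (8 * t ^ 2) * arcPoint t v - π ^ 2 / (4 * t)) / (√(2 * t / π) : ℝ) *
      (2 * (t ^ p * momentQuotient (exp (-arcPoint t v)) p)) := by
    rw [saddleIntegrand, momentSeries_eq (norm_exp_neg_arcPoint_lt_one ht₀ v) hp]
    ring
  rw [hfactor, norm_mul, norm_mul 2, Complex.norm_ofNat, norm_div, norm_mul,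
    norm_exp_saddle_eq ht₀, norm_real, Real.norm_of_nonneg (Real.sqrt_nonneg _),
    norm_genFunRatio_ofReal ht₀]
  have hfactor_nonneg : 0 ≤ Real.exp (-(π ^ 2 / (8 * t))) / √(2 * t / π) *
      (2 * ‖(t : ℂ) ^ p * momentQuotient (exp (-arcPoint t v)) p‖) := by positivity
  linear_combination
    mul_le_mul_of_nonneg_right (norm_genFun_arcPoint_le ht₀ ht₁ hv) hfactor_nonneg

lemma continuous_momentSeries_arcPoint (p : ℕ) (ht : 0 < t) :
    Continuous fun v => momentSeries (exp (-arcPoint t v)) p := by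
  have hseries (v : ℝ) := hasSum_momentSeries (norm_exp_neg_arcPoint_lt_one ht v) p
  have hnorm (m : ℕ) (v : ℝ) : ‖(absMoment p m : ℂ) * exp (-arcPoint t v) ^ m‖ =
      absMoment p m * Real.exp (-t) ^ m := by
    rw [norm_mul, norm_pow, norm_exp_neg_arcPoint, Complex.norm_natCast]
  simp only [← fun v => (hseries v).tsum_eq]
  have := continuous_arcPoint t
  exact continuous_tsum (fun m => by fun_prop)
    ((hseries 0).summable.norm.congr fun m => hnorm m 0) fun m v => (hnorm m v).le

lemma continuous_saddleIntegrand (p : ℕ) (ht : 0 < t) : Continuous (saddleIntegrand p t) := by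
  have := continuous_momentSeries_arcPoint p ht
  have := continuous_arcPoint t
  unfold saddleIntegrand
  fun_prop

lemma eventually_norm_genFunRatio_ofReal_le :
    ∀ᶠ t : ℝ in 𝓝[>] 0, ‖genFunRatio t‖ ≤ 1 := by
  have hlim := tendsto_genFunRatio (eventually_arcPoint_re_pos 0) (tendsto_arcPoint 0)
    (tendsto_one_div_arcPoint_re 0)
  simp only [arcPoint_zero] at hlim
  refine hlim.norm.eventually_le_const ?_
  rw [norm_inv, norm_real, Real.norm_of_nonneg (Real.sqrt_nonneg 2)]
  exact inv_lt_one_of_one_lt₀ (Real.lt_sqrt_of_sq_lt (by norm_num))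

lemma exists_norm_saddleIntegrand_le (hp : 2 ≤ p) : ∃ C : ℝ, 0 ≤ C ∧
    ∀ᶠ t in 𝓝[>] 0, ∀ v ∈ arcWindow t, ‖saddleIntegrand p t v‖ ≤ C * (1 + v ^ 2)⁻¹ := by
  obtain ⟨C, hC₀, hC⟩ := exists_norm_pow_mul_momentQuotient_le hp
  refine ⟨3 * 10 ^ 10 * (2 * C), by positivity, ?_⟩
  filter_upwards [Ioc_mem_nhdsGT one_pos, eventually_norm_genFunRatio_ofReal_le] with t ht hA v hv
  calc ‖saddleIntegrand p t v‖
      ≤ ‖genFunRatio t‖ * (3 * 10 ^ 10 * (1 + v ^ 2)⁻¹) *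
          (2 * ‖(t : ℂ) ^ p * momentQuotient (exp (-arcPoint t v)) p‖) :=
        norm_saddleIntegrand_le (by lia) ht.1 ht.2 hv
    _ ≤ 1 * (3 * 10 ^ 10 * (1 + v ^ 2)⁻¹) * (2 * C) := by
        gcongr
        exact hC _ t ht.1 ht.2 (norm_exp_neg_arcPoint t v)
    _ = 3 * 10 ^ 10 * (2 * C) * (1 + v ^ 2)⁻¹ := by ring

lemma integral_exp_neg_pi_sq_div_eight :
    ∫ v : ℝ, exp (-(π ^ 2 / 8 * v ^ 2)) = (√(8 / π) : ℝ) := by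
  have hvar : π / (π ^ 2 / 8) = 8 / π := by field_simp
  rw [← hvar, ← integral_gaussian, ← integral_complex_ofReal]
  push_cast
  simp only [neg_mul]

lemma measurableSet_arcWindow (t : ℝ) : MeasurableSet (arcWindow t) := measurableSet_Ioc

lemma tendsto_integral_saddleIntegrand (hp : 2 ≤ p) :
    Tendsto (fun t => ∫ v in arcWindow t, saddleIntegrand p t v) (𝓝[>] 0)
      (𝓝 (2 * ((√2 : ℝ) : ℂ)⁻¹ * (√(8 / π) : ℝ) *
        ∑' j : ℕ, (-1) ^ j * (p.factorial * (1 / (2 * ((j : ℂ) + 1))) ^ p))) := by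
  obtain ⟨C, hC₀, hC⟩ := exists_norm_saddleIntegrand_le hp
  rw [← integral_exp_neg_pi_sq_div_eight, ← MeasureTheory.integral_const_mul,
    ← MeasureTheory.integral_mul_const]
  have hindicator (t : ℝ) : ∫ v in arcWindow t, saddleIntegrand p t v =
      ∫ v, (arcWindow t).indicator (saddleIntegrand p t) v :=
    (MeasureTheory.integral_indicator (measurableSet_arcWindow t)).symm
  simp only [hindicator]
  refine MeasureTheory.tendsto_integral_filter_of_dominated_convergence
    (fun v => C * (1 + v ^ 2)⁻¹) ?_ ?_ (integrable_inv_one_add_sq.const_mul C) ?_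
  · filter_upwards [self_mem_nhdsWithin] with t ht
    exact (continuous_saddleIntegrand p ht).aestronglyMeasurable.indicator
      (measurableSet_arcWindow t)
  · filter_upwards [hC] with t ht
    refine .of_forall fun v => ?_
    rw [norm_indicator_eq_indicator_norm]
    exact Set.indicator_apply_le' (ht v) fun _ => by positivity
  · refine .of_forall fun v => (tendsto_saddleIntegrand hp v).congr' ?_
    filter_upwards [eventually_mem_arcWindow v] with t ht
    rw [Set.indicator_of_mem ht]

end SaddlePoint

section Asymptotics

variable {p : ℕ}

lemma setIntegral_arcWindow_comp {t : ℝ} (ht : 0 < t) (f : ℝ → ℂ) :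
    ∫ v in arcWindow t, f (t * √t * v) = (t * √t : ℝ)⁻¹ * ∫ θ in (-π)..π, f θ := by
  have hd := mul_sqrt_self_pos ht
  have hle : -(π / (t * √t)) ≤ π / (t * √t) := neg_le_self (div_nonneg Real.pi_pos.le hd.le)
  rw [arcWindow, ← intervalIntegral.integral_of_le hle,
    intervalIntegral.integral_comp_mul_left f hd.ne', mul_neg, mul_div_cancel₀ _ hd.ne', real_smul]

lemma setIntegral_momentSeries_mul_exp (p n : ℕ) {t : ℝ} (ht : 0 < t) :
    ∫ v in arcWindow t, momentSeries (exp (-arcPoint t v)) p * exp (n * arcPoint t v) =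
      (t * √t : ℝ)⁻¹ * (2 * π * absMoment p n) := by
  rw [← integral_mul_exp_eq_coeff (fun q hq => hasSum_momentSeries hq p) n ht]
  exact setIntegral_arcWindow_comp ht
    fun θ => momentSeries (exp (-(t - θ * I))) p * exp (n * (t - θ * I))

lemma absMoment_mul_pow_eq (p n : ℕ) {t : ℝ} (ht : 0 < t) (hn : n = π ^ 2 / (8 * t ^ 2)) :
    (absMoment p n : ℂ) * t ^ p =
      (√(2 / π) / (2 * π) * t ^ 2 * Real.exp (π ^ 2 / (4 * t)) : ℝ) *
        ∫ v in arcWindow t, saddleIntegrand p t v := by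
  have hnC : (n : ℂ) = π ^ 2 / (8 * t ^ 2) := mod_cast congrArg ((↑) : ℝ → ℂ) hn
  have hintegrand (v : ℝ) : saddleIntegrand p t v =
      t ^ p * exp (-(π ^ 2 / (4 * t))) / (√(2 * t / π) : ℝ) *
        (momentSeries (exp (-arcPoint t v)) p * exp (n * arcPoint t v)) := by
    rw [saddleIntegrand, ← hnC, sub_eq_add_neg, exp_add]
    ring
  have hsqrt : √(2 * t / π) = √(2 / π) * √t := by
    rw [← Real.sqrt_mul (by positivity)]
    congr 1
    ring
  simp only [hintegrand]
  rw [MeasureTheory.integral_const_mul, setIntegral_momentSeries_mul_exp p n ht, hsqrt, exp_neg]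
  have ht₀ : (t : ℂ) ≠ 0 := ofReal_ne_zero.2 ht.ne'
  have hrt : ((√t : ℝ) : ℂ) ^ 2 = t := by rw [← ofReal_pow, Real.sq_sqrt ht.le]
  have hrt₀ : ((√t : ℝ) : ℂ) ≠ 0 := ofReal_ne_zero.2 (Real.sqrt_pos.2 ht).ne'
  have hc : ((√(2 / π) : ℝ) : ℂ) ≠ 0 := ofReal_ne_zero.2 (by positivity)
  have hpi : (π : ℂ) ≠ 0 := ofReal_ne_zero.2 Real.pi_ne_zero
  push_cast
  have hexp := exp_ne_zero ((π : ℂ) ^ 2 / (4 * t))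
  generalize exp ((π : ℂ) ^ 2 / (4 * t)) = E at *
  field_simp
  rw [hrt]

lemma tendsto_pi_div_sqrt : Tendsto (fun n : ℕ => π / √(8 * n)) atTop (𝓝[>] 0) := by
  refine tendsto_nhdsWithin_iff.2 ⟨?_, ?_⟩
  · exact (Real.tendsto_sqrt_atTop.comp <|
      tendsto_natCast_atTop_atTop.const_mul_atTop (by norm_num)).const_div_atTop π
  · filter_upwards [eventually_gt_atTop 0] with n hn
    exact div_pos Real.pi_pos (Real.sqrt_pos.2 (by positivity))

lemma pi_sq_div_four_mul_pi_div_sqrt (x : ℝ) :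
    π ^ 2 / (4 * (π / √(8 * x))) = π * √(x / 2) := by
  have hsqrt : √(8 * x) = 4 * √(x / 2) := by
    rw [show 8 * x = 4 ^ 2 * (x / 2) by ring, Real.sqrt_mul (by norm_num),
      Real.sqrt_sq (by norm_num)]
  rw [hsqrt]
  field_simp

lemma sqrt_two_div_pi_mul_sqrt_eight_div_pi : √(2 / π) * √(8 / π) = 4 / π := by
  rw [← Real.sqrt_mul (by positivity), show 2 / π * (8 / π) = (4 / π) ^ 2 by field_simp; norm_num,
    Real.sqrt_sq (by positivity)]

lemma sqrt_two_div_pi_mul_gaussian_constant :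
    √(2 / π) / (2 * π) * (2 * (√2)⁻¹ * √(8 / π)) = √2 / π ^ 2 * 2 := by
  have htwo : √2 ^ 2 = 2 := Real.sq_sqrt zero_le_two
  rw [show √(2 / π) / (2 * π) * (2 * (√2)⁻¹ * √(8 / π)) = √(2 / π) * √(8 / π) / (π * √2) by ring,
    sqrt_two_div_pi_mul_sqrt_eight_div_pi]
  field_simp
  linarith

lemma absMoment_mul_pow_div_exp_eq (hp : 2 ≤ p) {n : ℕ} (hn : 0 < n) :
    ((absMoment p n * (π / √(8 * n)) ^ (p - 2) / Real.exp (π * √(n / 2)) : ℝ) : ℂ) =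
      (√(2 / π) / (2 * π) : ℝ) *
        ∫ v in arcWindow (π / √(8 * n)), saddleIntegrand p (π / √(8 * n)) v := by
  have ht : 0 < π / √(8 * n) := by positivity
  have hsaddle : (n : ℝ) = π ^ 2 / (8 * (π / √(8 * n)) ^ 2) := by
    rw [div_pow, Real.sq_sqrt (by positivity)]
    field_simp
  have hmoment := absMoment_mul_pow_eq p n ht hsaddle
  rw [pi_sq_div_four_mul_pi_div_sqrt, ← Nat.sub_add_cancel hp, pow_add] at hmoment
  have htC : ((π / √(8 * n) : ℝ) : ℂ) ≠ 0 := ofReal_ne_zero.2 ht.ne'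
  have hexp : ((Real.exp (π * √(n / 2)) : ℝ) : ℂ) ≠ 0 := ofReal_ne_zero.2 (Real.exp_pos _).ne'
  rw [ofReal_div _ (Real.exp _), div_eq_iff hexp]
  refine mul_right_cancel₀ (pow_ne_zero 2 htC) ?_
  rw [Nat.sub_add_cancel hp] at hmoment
  simp only [ofReal_mul, ofReal_pow, ofReal_natCast] at hmoment ⊢
  linear_combination hmoment

lemma tendsto_absMoment (hp : 2 ≤ p) :
    Tendsto (fun n : ℕ => ((absMoment p n * (π / √(8 * n)) ^ (p - 2) /
        Real.exp (π * √(n / 2)) : ℝ) : ℂ)) atTop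
      (𝓝 ((√2 / π ^ 2 : ℝ) *
        (2 * ∑' j : ℕ, (-1) ^ j * (p.factorial * (1 / (2 * ((j : ℂ) + 1))) ^ p)))) := by
  have hlim := ((tendsto_integral_saddleIntegrand hp).comp tendsto_pi_div_sqrt).const_mul
    ((√(2 / π) / (2 * π) : ℝ) : ℂ)
  have hconst := congrArg ((↑) : ℝ → ℂ) sqrt_two_div_pi_mul_gaussian_constant
  push_cast at hconst
  convert hlim.congr' ?_ using 2
  · push_cast
    linear_combination -(∑' j : ℕ, (-1 : ℂ) ^ j *
      (p.factorial * (1 / (2 * ((j : ℂ) + 1))) ^ p)) * hconst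
  · filter_upwards [eventually_gt_atTop 0] with n hn
    exact (absMoment_mul_pow_div_exp_eq hp hn).symm

lemma tendsto_N2moment {k : ℕ} (hk : k ≠ 0) :
    Tendsto (fun n : ℕ => (N2moment k n : ℝ) * (π / √(8 * n)) ^ (2 * (k - 1)) /
        Real.exp (π * √(n / 2))) atTop
      (𝓝 ((-1) ^ k * √2 * π ^ (2 * (k - 1)) *
        (((Polynomial.bernoulli (2 * k)).eval (1 / 2 : ℚ) : ℚ) : ℝ))) := by
  have hlim := tendsto_absMoment (p := 2 * k) (by lia)
  rw [two_mul_tsum_neg_one_pow_mul_factorial hk, ← ofReal_mul, tendsto_ofReal_iff] at hlim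
  simp only [N2moment_eq_absMoment, Int.cast_natCast, Nat.mul_sub_one]
  convert hlim using 2
  rw [← pow_mul_pow_sub π (show 2 ≤ 2 * k by lia)]
  field_simp

end Asymptotics

end M2Rank

/-- The asymptotic `N2_{2ℓ}(n) ∼ (−1)^ℓ √2 (8n)^{ℓ−1} B_{2ℓ}(1/2) exp(π√(n/2))`
as `n → ∞`, for each fixed `ℓ ≥ 1`. -/
theorem N2moment_asymptotic (ℓ : ℕ) (hℓ : 1 ≤ ℓ) :
    Filter.Tendsto
      (fun n : ℕ =>
        (N2moment ℓ n : ℝ) /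
          ((-1 : ℝ) ^ ℓ * Real.sqrt 2 * (8 * (n : ℝ)) ^ (ℓ - 1) *
            (((Polynomial.bernoulli (2 * ℓ)).eval (1 / 2 : ℚ) : ℚ) : ℝ) *
            Real.exp (Real.pi * Real.sqrt ((n : ℝ) / 2))))
      Filter.atTop (nhds 1) := by
  have hℓ₀ : ℓ ≠ 0 := Nat.one_le_iff_ne_zero.1 hℓ
  have hbernoulli := M2Rank.eval_bernoulli_half_ne_zero hℓ₀
  have hconst : (-1) ^ ℓ * √2 * Real.pi ^ (2 * (ℓ - 1)) *
      (((Polynomial.bernoulli (2 * ℓ)).eval (1 / 2 : ℚ) : ℚ) : ℝ) ≠ 0 :=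
    mul_ne_zero (by positivity) hbernoulli
  rw [← div_self hconst]
  refine ((M2Rank.tendsto_N2moment hℓ₀).div_const _).congr fun n => ?_
  have hpow : (Real.pi / √(8 * n)) ^ (2 * (ℓ - 1)) =
      Real.pi ^ (2 * (ℓ - 1)) / (8 * n) ^ (ℓ - 1) := by
    rw [div_pow, pow_mul √(8 * n), Real.sq_sqrt (by positivity)]
  rw [hpow]
  field_simp
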